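/- arXiv:alg-geom/9403010 — 7 statements merged into one kernel-verified Lean document; each statement's English description precedes it below -/
import Mathlib

section
/- Let 1 ≤ k ≤ n − 1 and let V¹, V², V³ be three complete flags in ℂⁿ that are mutually transversal, i.e., dim(V¹ᵢ ∩ V²ⱼ ∩ V³_m) = max(0, i + j + m − 2n) for all 1 ≤ i, j, m ≤ n. Then there is exactly one tuple (U, W, Λ¹, Λ², Λ³) of linear subspaces of ℂⁿ with dim U = k − 1, dim W = k + 1, dim Λ¹ = dim Λ² = dim Λ³ = k, satisfying: (1) U ⊆ Λⁱ ⊆ W for i = 1, 2, 3; (2) dim(Λ¹ ∩ V¹_{n−k+i−1}) ≥ i for i = 1,…,k; (3) V²₁ ⊆ Λ²; (4) Λ³ = V³_k. Moreover this tuple is given explicitly by U = V³_k ∩ V¹_{n−1}, W = V³_k + V²₁, Λ¹ = W ∩ V¹_{n−1}, Λ² = U + V²₁, Λ³ = V³_k. -/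
/-- The conditions (1)-(4) on a tuple `(U, W, Λ¹, Λ², Λ³)` of subspaces of `ℂⁿ`:
dimensions `k-1, k+1, k, k, k`; all `Λⁱ` are pinched between `U` and `W`
(so they lie on the degree-one rational curve determined by `U ⊆ W`);
`Λ¹` lies in the Schubert variety `Ω_{V¹}(n-k, …, n-1)`, i.e.
`dim (Λ¹ ∩ V¹_{n-k+i-1}) ≥ i` for `i = 1, …, k`; `Λ²` lies in `Ω_{V²}(1, n-k+2, …, n)`,
i.e. `V²₁ ⊆ Λ²`; and `Λ³` is the point `V³_k`. -/
def SchubertIncidence (n k : ℕ) (V1 V2 V3 : ℕ → Submodule ℂ (Fin n → ℂ))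
    (U W Λ1 Λ2 Λ3 : Submodule ℂ (Fin n → ℂ)) : Prop :=
  Module.finrank ℂ U = k - 1 ∧ Module.finrank ℂ W = k + 1 ∧
  Module.finrank ℂ Λ1 = k ∧ Module.finrank ℂ Λ2 = k ∧ Module.finrank ℂ Λ3 = k ∧
  (U ≤ Λ1 ∧ Λ1 ≤ W) ∧ (U ≤ Λ2 ∧ Λ2 ≤ W) ∧ (U ≤ Λ3 ∧ Λ3 ≤ W) ∧
  (∀ i, 1 ≤ i → i ≤ k → i ≤ Module.finrank ℂ ↥(Λ1 ⊓ V1 (n - k + i - 1))) ∧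
  V2 1 ≤ Λ2 ∧
  Λ3 = V3 k

/-!
A `k`-dimensional `Λ` lies in `Ω_{V¹}(n-k, …, n-1)` exactly when it is contained in the hyperplane
`H = V¹_{n-1}`: the condition with `i = k` says `Λ ⊆ H`, and conversely counting dimensions inside
`H` gives all the others. So only the hyperplane `H`, the line `L = V²₁` and the subspace
`P = V³_k` matter, and transversality gives `L ⊄ H`, `L ⊄ P` and `P ⊄ H`.

The incidences force `U ⊆ P ∩ H`, `P + L ⊆ W`, `Λ¹ ⊆ W ∩ H` and `U + L ⊆ Λ²`. Adding `L` to a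
subspace not containing it raises the dimension by one, and cutting with `H` a subspace not
contained in it lowers the dimension by one, so all four inclusions are equalities.
-/

open Module

section DivisionRing

variable {K E : Type*} [DivisionRing K] [AddCommGroup E] [Module K E]

section Dimension

variable [FiniteDimensional K E] {A B C H L : Submodule K E}

theorem finrank_sup_line (hL : finrank K L = 1) (hLA : ¬ L ≤ A) :
    finrank K ↥(A ⊔ L) = finrank K A + 1 := by
  have hdisj : Disjoint A L :=
    ((Submodule.isAtom_iff_finrank_eq_one.2 hL).not_le_iff_disjoint.1 hLA).symm
  have hdim := Submodule.finrank_sup_add_finrank_inf_eq A L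
  rwa [hdisj.eq_bot, finrank_bot, hL] at hdim

theorem finrank_add_finrank_le_of_le (hA : A ≤ C) (hB : B ≤ C) :
    finrank K A + finrank K B ≤ finrank K C + finrank K ↥(A ⊓ B) := by
  rw [← Submodule.finrank_sup_add_finrank_inf_eq]
  gcongr
  exact Submodule.finrank_mono (sup_le hA hB)

theorem finrank_inf_hyperplane_add_one (hH : finrank K H + 1 = finrank K E)
    (hAH : ¬ A ≤ H) : finrank K ↥(A ⊓ H) + 1 = finrank K A := by
  have hlt : finrank K ↥(A ⊓ H) < finrank K A :=
    Submodule.finrank_lt_finrank_of_lt (inf_lt_left.2 hAH)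
  have hge : finrank K A + finrank K H ≤ finrank K E + finrank K ↥(A ⊓ H) := by
    simpa only [finrank_top] using finrank_add_finrank_le_of_le (K := K) (C := ⊤) le_top le_top
  omega

theorem le_of_finrank_le_finrank_inf (h : finrank K A ≤ finrank K ↥(A ⊓ B)) : A ≤ B :=
  inf_eq_left.1 (Submodule.eq_of_le_of_finrank_le inf_le_left h)

end Dimension

/-- A complete flag `0 = F₀ ⊂ F₁ ⊂ ⋯ ⊂ Fₙ = E` in an `n`-dimensional space, indexed by `ℕ`
with arbitrary values beyond `n`. -/
structure IsCompleteFlag (n : ℕ) (F : ℕ → Submodule K E) : Prop where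
  finrank_space : finrank K E = n
  finrank_eq : ∀ j, j ≤ n → finrank K (F j) = j
  mono : ∀ i j, i ≤ j → j ≤ n → F i ≤ F j

/-- Mutual transversality of three complete flags; the truncated subtraction is the
`max (0, i + j + m - 2 n)` of the usual formulation. -/
def IsTransversal (n : ℕ) (F G H : ℕ → Submodule K E) : Prop :=
  ∀ i j m, 1 ≤ i → i ≤ n → 1 ≤ j → j ≤ n → 1 ≤ m → m ≤ n →
    finrank K ↥(F i ⊓ G j ⊓ H m) = i + j + m - 2 * n

/-- Membership of `Λ` in the Schubert variety `Ω_F(n-k, …, n-1)` of the Grassmannian of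
`k`-dimensional subspaces, without the requirement that `Λ` have dimension `k`. -/
def SchubertCondition (n k : ℕ) (F : ℕ → Submodule K E) (Λ : Submodule K E) : Prop :=
  ∀ i, 1 ≤ i → i ≤ k → i ≤ finrank K ↥(Λ ⊓ F (n - k + i - 1))

/-- `SchubertIncidence` over an arbitrary division ring. The second and third flags enter only
through the line `L = V²₁` and the subspace `P = V³_k`. -/
structure IsSchubertTuple (n k : ℕ) (F : ℕ → Submodule K E) (L P U W Λ1 Λ2 Λ3 : Submodule K E) :
    Prop where
  finrank_U : finrank K U = k - 1
  finrank_W : finrank K W = k + 1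
  finrank_Λ1 : finrank K Λ1 = k
  finrank_Λ2 : finrank K Λ2 = k
  finrank_Λ3 : finrank K Λ3 = k
  mem_pencil_Λ1 : U ≤ Λ1 ∧ Λ1 ≤ W
  mem_pencil_Λ2 : U ≤ Λ2 ∧ Λ2 ≤ W
  mem_pencil_Λ3 : U ≤ Λ3 ∧ Λ3 ≤ W
  schubertCondition : SchubertCondition n k F Λ1
  line_le : L ≤ Λ2
  eq_point : Λ3 = P

namespace IsTransversal

variable {n : ℕ} {F G H : ℕ → Submodule K E}

theorem swap (h : IsTransversal n F G H) : IsTransversal n G F H := by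
  intro i j m hi hin hj hjn hm hmn
  rw [inf_comm (G i), h j i m hj hjn hi hin hm hmn, add_comm j]

theorem rotate (h : IsTransversal n F G H) : IsTransversal n G H F := by
  intro i j m hi hin hj hjn hm hmn
  rw [inf_comm, ← inf_assoc, h m i j hm hmn hi hin hj hjn, add_assoc, add_comm m]

end IsTransversal

variable [FiniteDimensional K E] {n k : ℕ} {F G H : ℕ → Submodule K E}
  {L P U W Λ Λ1 Λ2 Λ3 : Submodule K E}

theorem IsCompleteFlag.eq_top (hF : IsCompleteFlag n F) : F n = ⊤ :=
  Submodule.eq_top_of_finrank_eq ((hF.finrank_eq n le_rfl).trans hF.finrank_space.symm)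

theorem IsTransversal.not_le (h : IsTransversal n F G H) (hF : IsCompleteFlag n F)
    (hH : IsCompleteFlag n H) {i j : ℕ} (hi : 1 ≤ i) (hin : i ≤ n) (hj : 1 ≤ j) (hjn : j < n) :
    ¬ F i ≤ G j := by
  intro hle
  have hdim := h i j n hi hin hj hjn.le (by omega) le_rfl
  rw [inf_eq_left.2 hle, hH.eq_top, inf_top_eq, hF.finrank_eq i hin] at hdim
  omega

theorem schubertCondition_iff_le (hF : IsCompleteFlag n F) (hΛ : finrank K Λ = k) :
    SchubertCondition n k F Λ ↔ Λ ≤ F (n - 1) := by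
  have hkn : k ≤ n := hΛ ▸ hF.finrank_space ▸ Submodule.finrank_le Λ
  constructor
  · intro h
    obtain rfl | hk := Nat.eq_zero_or_pos k
    · exact (Submodule.finrank_eq_zero.1 hΛ).trans_le bot_le
    · refine le_of_finrank_le_finrank_inf ?_
      have hlast := h k hk le_rfl
      rwa [Nat.sub_add_cancel hkn, ← hΛ] at hlast
  · intro hle i hi hik
    have hcount := finrank_add_finrank_le_of_le hle
      (hF.mono (n - k + i - 1) (n - 1) (by omega) (by omega))
    rw [hΛ, hF.finrank_eq _ (by omega), hF.finrank_eq _ (by omega)] at hcount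
    omega

theorem IsCompleteFlag.finrank_hyperplane_add_one (hF : IsCompleteFlag n F)
    (hne : F (n - 1) ≠ ⊤) : finrank K (F (n - 1)) + 1 = finrank K E := by
  have hn : n ≠ 0 := by
    rintro rfl
    exact hne hF.eq_top
  rw [hF.finrank_eq _ (Nat.sub_le n 1), hF.finrank_space]
  omega

theorem isSchubertTuple_inf_sup (hF : IsCompleteFlag n F) (hL : finrank K L = 1)
    (hP : finrank K P = k) (hLF : ¬ L ≤ F (n - 1)) (hLP : ¬ L ≤ P) (hPF : ¬ P ≤ F (n - 1)) :
    IsSchubertTuple n k F L P (P ⊓ F (n - 1)) (P ⊔ L) ((P ⊔ L) ⊓ F (n - 1))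
      (P ⊓ F (n - 1) ⊔ L) P := by
  have hH := hF.finrank_hyperplane_add_one fun h ↦ hLF (h ▸ le_top)
  have hU : finrank K ↥(P ⊓ F (n - 1)) + 1 = k :=
    hP ▸ finrank_inf_hyperplane_add_one hH hPF
  have hW : finrank K ↥(P ⊔ L) = k + 1 :=
    hP ▸ finrank_sup_line hL hLP
  have hΛ1 : finrank K ↥((P ⊔ L) ⊓ F (n - 1)) = k := by
    have hWF : ¬ P ⊔ L ≤ F (n - 1) := fun h ↦ hPF (le_sup_left.trans h)
    have hdrop := finrank_inf_hyperplane_add_one hH hWF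
    omega
  have hΛ2 : finrank K ↥(P ⊓ F (n - 1) ⊔ L) = k := by
    rw [finrank_sup_line hL fun h ↦ hLP (h.trans inf_le_left), hU]
  exact
    { finrank_U := by omega
      finrank_W := hW
      finrank_Λ1 := hΛ1
      finrank_Λ2 := hΛ2
      finrank_Λ3 := hP
      mem_pencil_Λ1 := ⟨inf_le_inf_right _ le_sup_left, inf_le_left⟩
      mem_pencil_Λ2 := ⟨le_sup_left, sup_le_sup_right inf_le_left _⟩
      mem_pencil_Λ3 := ⟨inf_le_left, le_sup_left⟩
      schubertCondition := (schubertCondition_iff_le hF hΛ1).2 inf_le_right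
      line_le := le_sup_right
      eq_point := rfl }

theorem IsSchubertTuple.eq_inf_sup (h : IsSchubertTuple n k F L P U W Λ1 Λ2 Λ3)
    (hF : IsCompleteFlag n F) (hL : finrank K L = 1) (hLF : ¬ L ≤ F (n - 1)) (hLP : ¬ L ≤ P)
    (hPF : ¬ P ≤ F (n - 1)) :
    U = P ⊓ F (n - 1) ∧ W = P ⊔ L ∧ Λ1 = (P ⊔ L) ⊓ F (n - 1) ∧ Λ2 = P ⊓ F (n - 1) ⊔ L ∧
      Λ3 = P := by
  obtain rfl := h.eq_point
  have hex := isSchubertTuple_inf_sup hF hL h.finrank_Λ3 hLF hLP hPF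
  have hΛ1F : Λ1 ≤ F (n - 1) := (schubertCondition_iff_le hF h.finrank_Λ1).1 h.schubertCondition
  have hU : U = Λ3 ⊓ F (n - 1) :=
    Submodule.eq_of_le_of_finrank_eq (le_inf h.mem_pencil_Λ3.1 (h.mem_pencil_Λ1.1.trans hΛ1F))
      (h.finrank_U.trans hex.finrank_U.symm)
  have hW : Λ3 ⊔ L = W :=
    Submodule.eq_of_le_of_finrank_eq (sup_le h.mem_pencil_Λ3.2 (h.line_le.trans h.mem_pencil_Λ2.2))
      (hex.finrank_W.trans h.finrank_W.symm)
  have hΛ1 : Λ1 = (Λ3 ⊔ L) ⊓ F (n - 1) :=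
    Submodule.eq_of_le_of_finrank_eq (le_inf (hW ▸ h.mem_pencil_Λ1.2) hΛ1F)
      (h.finrank_Λ1.trans hex.finrank_Λ1.symm)
  have hΛ2 : Λ3 ⊓ F (n - 1) ⊔ L = Λ2 :=
    Submodule.eq_of_le_of_finrank_eq (sup_le (hU ▸ h.mem_pencil_Λ2.1) h.line_le)
      (hex.finrank_Λ2.trans h.finrank_Λ2.symm)
  exact ⟨hU, hW.symm, hΛ1, hΛ2.symm, rfl⟩

theorem unique_line_through_three_schubert_varieties_general (hF : IsCompleteFlag n F)
    (hL : finrank K L = 1) (hP : finrank K P = k) (hLF : ¬ L ≤ F (n - 1)) (hLP : ¬ L ≤ P)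
    (hPF : ¬ P ≤ F (n - 1)) :
    IsSchubertTuple n k F L P (P ⊓ F (n - 1)) (P ⊔ L) ((P ⊔ L) ⊓ F (n - 1))
        (P ⊓ F (n - 1) ⊔ L) P ∧
      ∀ U W Λ1 Λ2 Λ3 : Submodule K E, IsSchubertTuple n k F L P U W Λ1 Λ2 Λ3 →
        U = P ⊓ F (n - 1) ∧ W = P ⊔ L ∧ Λ1 = (P ⊔ L) ⊓ F (n - 1) ∧ Λ2 = P ⊓ F (n - 1) ⊔ L ∧
          Λ3 = P :=
  ⟨isSchubertTuple_inf_sup hF hL hP hLF hLP hPF,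
    fun _ _ _ _ _ h ↦ h.eq_inf_sup hF hL hLF hLP hPF⟩

end DivisionRing

theorem schubertIncidence_iff_isSchubertTuple {n k : ℕ} {V1 V2 V3 : ℕ → Submodule ℂ (Fin n → ℂ)}
    {U W Λ1 Λ2 Λ3 : Submodule ℂ (Fin n → ℂ)} :
    SchubertIncidence n k V1 V2 V3 U W Λ1 Λ2 Λ3 ↔
      IsSchubertTuple n k V1 (V2 1) (V3 k) U W Λ1 Λ2 Λ3 :=
  ⟨fun ⟨hU, hW, h1, h2, h3, hp1, hp2, hp3, hS, hL, hP⟩ ↦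
      ⟨hU, hW, h1, h2, h3, hp1, hp2, hp3, hS, hL, hP⟩,
    fun ⟨hU, hW, h1, h2, h3, hp1, hp2, hp3, hS, hL, hP⟩ ↦
      ⟨hU, hW, h1, h2, h3, hp1, hp2, hp3, hS, hL, hP⟩⟩

/-- Let `1 ≤ k ≤ n - 1` and let `V¹, V², V³` be three mutually
transversal complete flags in `ℂⁿ`.  Then there is exactly one tuple
`(U, W, Λ¹, Λ², Λ³)` of subspaces of `ℂⁿ` satisfying the incidence conditions (1)-(4),
and it is given explicitly by `U = V³_k ∩ V¹_{n-1}`, `W = V³_k + V²₁`,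
`Λ¹ = W ∩ V¹_{n-1}`, `Λ² = U + V²₁`, `Λ³ = V³_k`. -/
theorem unique_line_through_three_schubert_varieties
    (n k : ℕ) (hk : 1 ≤ k) (hkn : k ≤ n - 1)
    (V1 V2 V3 : ℕ → Submodule ℂ (Fin n → ℂ))
    (hV1rank : ∀ j, j ≤ n → Module.finrank ℂ (V1 j) = j)
    (hV2rank : ∀ j, j ≤ n → Module.finrank ℂ (V2 j) = j)
    (hV3rank : ∀ j, j ≤ n → Module.finrank ℂ (V3 j) = j)
    (hV1mono : ∀ i j, i ≤ j → j ≤ n → V1 i ≤ V1 j)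
    (hV2mono : ∀ i j, i ≤ j → j ≤ n → V2 i ≤ V2 j)
    (hV3mono : ∀ i j, i ≤ j → j ≤ n → V3 i ≤ V3 j)
    (htrans : ∀ i j m, 1 ≤ i → i ≤ n → 1 ≤ j → j ≤ n → 1 ≤ m → m ≤ n →
      Module.finrank ℂ ↥(V1 i ⊓ V2 j ⊓ V3 m) = i + j + m - 2 * n) :
    SchubertIncidence n k V1 V2 V3
        (V3 k ⊓ V1 (n - 1)) (V3 k ⊔ V2 1)
        ((V3 k ⊔ V2 1) ⊓ V1 (n - 1)) ((V3 k ⊓ V1 (n - 1)) ⊔ V2 1) (V3 k) ∧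
      ∀ U W Λ1 Λ2 Λ3 : Submodule ℂ (Fin n → ℂ),
        SchubertIncidence n k V1 V2 V3 U W Λ1 Λ2 Λ3 →
          U = V3 k ⊓ V1 (n - 1) ∧ W = V3 k ⊔ V2 1 ∧
          Λ1 = (V3 k ⊔ V2 1) ⊓ V1 (n - 1) ∧ Λ2 = (V3 k ⊓ V1 (n - 1)) ⊔ V2 1 ∧
          Λ3 = V3 k := by
  have hV1 : IsCompleteFlag n V1 := ⟨finrank_fin_fun ℂ, hV1rank, hV1mono⟩
  have hV2 : IsCompleteFlag n V2 := ⟨finrank_fin_fun ℂ, hV2rank, hV2mono⟩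
  have hV3 : IsCompleteFlag n V3 := ⟨finrank_fin_fun ℂ, hV3rank, hV3mono⟩
  have hT : IsTransversal n V1 V2 V3 := htrans
  simp only [schubertIncidence_iff_isSchubertTuple]
  exact unique_line_through_three_schubert_varieties_general hV1
    (hV2rank 1 (by omega)) (hV3rank k (by omega))
    (hT.swap.not_le hV2 hV3 le_rfl (by omega) (by omega) (by omega))
    (hT.rotate.not_le hV2 hV1 le_rfl (by omega) hk (by omega))
    (hT.rotate.rotate.not_le hV3 hV2 hk (by omega) (by omega) (by omega))
end

section
/- Fix positive integer weights d₁,…,d_k for the variables of ℂ[X₁,…,X_k] and let g₁,…,g_k ∈ ℂ[X₁,…,X_k] be weighted homogeneous polynomials of weighted degrees e₁,…,e_k such that the quotient ring ℂ[X₁,…,X_k]/(g₁,…,g_k) is finite dimensional as a ℂ-vector space. Set N = ∑ᵢ eᵢ − ∑ᵢ dᵢ. Then every weighted homogeneous polynomial F ∈ ℂ[X₁,…,X_k] of weighted degree strictly greater than N lies in the ideal (g₁,…,g_k). -/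
/-!
Grading the monic relation that `X j` satisfies modulo `(g)` shows that a power of `X j` lies in
`(g)`, so `X j ^ (c j + 1) = ∑ i, a j i * g i` with `a j i` homogeneous. If `F` is homogeneous of
degree larger than `∑ e i - ∑ d i`, then `det a * F` has degree larger than that of `∏ X j ^ c j`,
so each of its monomials is divisible by some `X j ^ (c j + 1)`. It remains to show that
`det a * F ∈ (X j ^ (c j + 1))` forces `F ∈ (g)`, which needs no grading.

Pass to polynomials over `A = R[X] / (g)` and let `y j ∈ A` be the class of `X j`. As `g` vanishes
at `y`, we can write `g = b (X - y)`, and `X j ^ (c j + 1) = δ j * (X j - y j)` for the geometric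
sum `δ j = ∑ s, X j ^ s * y j ^ (c j - s)`, because `y j ^ (c j + 1) = 0`. The matrices `a b` and
`diagonal δ` agree on the vector `X - y`, whose only syzygies are the Koszul ones, and this makes
their determinants congruent modulo `(X j ^ (c j + 1))`. Hence `(∏ δ j) * F` lies in that ideal. So
does `(∏ δ j) * (F - F(y))` by Cramer's rule, and therefore also `F(y) * ∏ δ j`, whose coefficient
at `∏ X j ^ c j` is `F(y)`. Thus `F(y) = 0`; but `F(y)` is the class of `F` in `A`.
-/

open MvPolynomial Matrix

namespace WeightedMacaulay

-- Every syzygy of the variables is a combination of Koszul syzygies, so by `hm` the assignment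
-- `X i ↦ m i` extends to the ideal they generate; `φ` is that extension, and `0` on constants.
theorem exists_linearMap_mul_X_eq_smul {σ R N : Type*} [CommSemiring R] [AddCommMonoid N]
    [Module R N] [Module (MvPolynomial σ R) N] [IsScalarTower R (MvPolynomial σ R) N] {m : σ → N}
    (hm : ∀ i j, (X i : MvPolynomial σ R) • m j = (X j : MvPolynomial σ R) • m i) :
    ∃ φ : MvPolynomial σ R →ₗ[R] N, ∀ f i, φ (f * X i) = f • m i := by
  classical
  let val : (σ →₀ ℕ) → N := fun α =>
    if h : ∃ i, α i ≠ 0 then monomial (α - Finsupp.single h.choose 1) (1 : R) • m h.choose else 0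
  have val_add_single (β : σ →₀ ℕ) (i : σ) :
      val (β + Finsupp.single i 1) = monomial β (1 : R) • m i := by
    have h : ∃ j, (β + Finsupp.single i 1 : σ →₀ ℕ) j ≠ 0 := ⟨i, by simp⟩
    simp only [val, dif_pos h]
    have hj := h.choose_spec
    generalize h.choose = j at hj ⊢
    obtain rfl | hij := eq_or_ne i j
    · rw [add_tsub_cancel_right]
    · obtain ⟨γ, rfl⟩ : ∃ γ, β = γ + Finsupp.single j 1 := by
        refine ⟨β - Finsupp.single j 1, (tsub_add_cancel_of_le ?_).symm⟩
        simpa [Finsupp.single_apply, hij, Nat.one_le_iff_ne_zero] using hj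
      rw [add_right_comm, add_tsub_cancel_right, monomial_add_single, monomial_add_single,
        pow_one, pow_one, mul_smul, mul_smul, hm]
  refine ⟨(basisMonomials σ R).constr R val, fun f i => ?_⟩
  induction f using MvPolynomial.induction_on' with
  | monomial β r =>
    have : monomial β r * X i = r • basisMonomials σ R (β + Finsupp.single i 1) := by
      rw [coe_basisMonomials, smul_monomial, monomial_add_single, pow_one, smul_eq_mul, mul_one]
    rw [this, map_smul, Module.Basis.constr_basis, val_add_single, ← smul_assoc, smul_monomial,
      smul_eq_mul, mul_one]
  | add p q hp hq => rw [add_mul, map_add, hp, hq, add_smul]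

section Matrix

variable {σ S : Type*} [Fintype σ] [DecidableEq σ] [CommRing S]

theorem mul_adjugate_sub_mul_adjugate_mem {I : Ideal S} {U : Matrix σ σ S} {z : σ → S} {j : σ}
    (hU : ∀ i ≠ j, (U *ᵥ z) i ∈ I) (a b : σ) :
    z b * U.adjugate a j - z a * U.adjugate b j ∈ I := by
  let W := U.updateRow j (Pi.single a 1)
  have hdet : W.det = U.adjugate a j := (adjugate_apply U a j).symm
  have hadj : W.adjugate b j = U.adjugate b j := by
    rw [adjugate_apply, adjugate_apply, updateRow_idem]
  have hWj : (W *ᵥ z) j = z a := by simp [W, mulVec]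
  have hW : ∀ i ≠ j, (W *ᵥ z) i ∈ I := fun i hi => by simpa [W, mulVec, hi] using hU i hi
  have hcramer : z b * W.det = ∑ i, W.adjugate b i * (W *ᵥ z) i := by
    have := congrFun (mulVec_mulVec z W.adjugate W) b
    rw [adjugate_mul, smul_mulVec, one_mulVec, Pi.smul_apply, smul_eq_mul] at this
    rw [mul_comm, ← this, mulVec, dotProduct]
  have hsum : z b * U.adjugate a j - z a * U.adjugate b j =
      ∑ i ∈ Finset.univ.erase j, W.adjugate b i * (W *ᵥ z) i := by
    rw [← hdet, hcramer, ← Finset.add_sum_erase _ _ (Finset.mem_univ j), hWj, hadj]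
    ring
  rw [hsum]
  exact I.sum_mem fun i hi => I.mul_mem_left _ (hW i (Finset.ne_of_mem_erase hi))

theorem det_mul_mem_span_mulVec (U : Matrix σ σ S) {z : σ → S} {f : S}
    (hf : f ∈ Ideal.span (Set.range z)) : U.det * f ∈ Ideal.span (Set.range (U *ᵥ z)) := by
  rw [Ideal.mem_span_range_iff_exists_fun] at hf ⊢
  obtain ⟨b, rfl⟩ := hf
  refine ⟨b ᵥ* U.adjugate, ?_⟩
  change (b ᵥ* U.adjugate) ⬝ᵥ (U *ᵥ z) = U.det * (b ⬝ᵥ z)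
  rw [← dotProduct_mulVec, mulVec_mulVec, adjugate_mul, smul_mulVec, one_mulVec,
    dotProduct_smul, smul_eq_mul]

end Matrix

section Evaluation

variable {σ R : Type*} [CommRing R]

theorem exists_ringEquiv_X_sub_C_eq_X (y : σ → R) :
    ∃ τ : MvPolynomial σ R ≃+* MvPolynomial σ R, ∀ i, τ (X i - C (y i)) = X i := by
  let τ : MvPolynomial σ R ≃ₐ[R] MvPolynomial σ R :=
    AlgEquiv.ofAlgHom (aeval fun i => X i + C (y i)) (aeval fun i => X i - C (y i))
      (by ext; simp) (by ext; simp)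
  exact ⟨τ.toRingEquiv, fun i => by simp [τ]⟩

theorem sub_C_eval_mem_span_X_sub_C (y : σ → R) (f : MvPolynomial σ R) :
    f - C (eval y f) ∈ Ideal.span (Set.range fun i => X i - C (y i)) := by
  let π := Ideal.Quotient.mk (Ideal.span (Set.range fun i => (X i - C (y i) : MvPolynomial σ R)))
  have h : π = (π.comp C).comp (eval y) := by
    ext i
    · simp
    · have : π (X i) = π (C (y i)) := Ideal.Quotient.eq.mpr (Ideal.subset_span ⟨i, rfl⟩)
      simpa using this
  exact Ideal.Quotient.eq.mp (DFunLike.congr_fun h f)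

end Evaluation

section Monomials

variable {σ R : Type*} [CommSemiring R]

theorem mem_span_range_X_pow_iff {n : σ → ℕ} {f : MvPolynomial σ R} :
    f ∈ Ideal.span (Set.range fun i => (X i : MvPolynomial σ R) ^ n i) ↔
      ∀ m ∈ f.support, ∃ i, n i ≤ m i := by
  have : (Set.range fun i => (X i : MvPolynomial σ R) ^ n i) =
      (fun s => monomial s (1 : R)) '' Set.range fun i => Finsupp.single i (n i) := by
    rw [← Set.range_comp]
    exact congrArg Set.range (funext fun i => X_pow_eq_monomial)
  simp [this, mem_ideal_span_monomial_image]

theorem coeff_prod_geomSum [Fintype σ] (c : σ → ℕ) (y : σ → R) :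
    coeff (Finsupp.equivFunOnFinite.symm c)
      (∏ i, ∑ s ∈ Finset.range (c i + 1), X i ^ s * C (y i) ^ (c i - s)) = 1 := by
  classical
  have hterm (p : σ → ℕ) : ∏ i, (X i ^ p i * C (y i) ^ (c i - p i) : MvPolynomial σ R) =
      monomial (Finsupp.equivFunOnFinite.symm p) (∏ i, y i ^ (c i - p i)) := by
    rw [Finset.prod_mul_distrib, mul_comm, monomial_eq, Finsupp.prod_fintype _ _ (by simp)]
    simp
  simp only [Finset.prod_univ_sum, hterm, coeff_sum, coeff_monomial, EmbeddingLike.apply_eq_iff_eq]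
  rw [Finset.sum_ite_eq_of_mem' _ _ _ (by simp)]
  simp

theorem mem_span_range_X_pow_of_isWeightedHomogeneous {M : Type*} [Fintype σ] [AddCommMonoid M]
    [PartialOrder M] [IsOrderedAddMonoid M] {d : σ → M} (hd : ∀ i, 0 ≤ d i) {c : σ → ℕ} {n : M}
    (hn : ∑ i, c i • d i < n) {f : MvPolynomial σ R} (hf : IsWeightedHomogeneous d f n) :
    f ∈ Ideal.span (Set.range fun i => (X i : MvPolynomial σ R) ^ (c i + 1)) := by
  refine mem_span_range_X_pow_iff.mpr fun s hs => ?_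
  by_contra! hlt
  have hweight : ∑ i, s i • d i = n := by
    rw [← hf (mem_support_iff.mp hs), Finsupp.weight_apply, Finsupp.sum_fintype _ _ (by simp)]
  exact hn.not_ge (hweight ▸ Finset.sum_le_sum fun i _ =>
    nsmul_le_nsmul_left (hd i) (Nat.lt_succ_iff.mp (hlt i)))

end Monomials

section Determinants

variable {σ R : Type*} [Fintype σ] [DecidableEq σ] [CommRing R]

theorem det_updateRow_mem_of_dotProduct_X_eq_zero {I : Ideal (MvPolynomial σ R)}
    {U : Matrix σ σ (MvPolynomial σ R)} {j : σ} (hU : ∀ i ≠ j, (U *ᵥ X) i ∈ I)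
    {w : σ → MvPolynomial σ R} (hw : w ⬝ᵥ X = 0) : (U.updateRow j w).det ∈ I := by
  have hsymm (a b : σ) : (X a : MvPolynomial σ R) • Ideal.Quotient.mk I (U.adjugate b j) =
      (X b : MvPolynomial σ R) • Ideal.Quotient.mk I (U.adjugate a j) :=
    Ideal.Quotient.eq.mpr (mul_adjugate_sub_mul_adjugate_mem hU b a)
  obtain ⟨φ, hφ⟩ := exists_linearMap_mul_X_eq_smul hsymm
  have hdet : (U.updateRow j w).det = ∑ a, w a * U.adjugate a j := by
    rw [det_eq_sum_mul_adjugate_row _ j]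
    simp only [updateRow_self, adjugate_apply, updateRow_idem]
  rw [← Ideal.Quotient.eq_zero_iff_mem]
  calc Ideal.Quotient.mk I (U.updateRow j w).det = ∑ a, φ (w a * X a) := by
        simp only [hdet, map_sum, hφ]
        rfl
    _ = 0 := by rw [← map_sum, ← dotProduct, hw, map_zero]

theorem det_sub_det_mem_span_mulVec_X {U V : Matrix σ σ (MvPolynomial σ R)}
    (h : U *ᵥ X = V *ᵥ X) : U.det - V.det ∈ Ideal.span (Set.range (V *ᵥ X)) := by
  suffices of_eq_off : ∀ (s : Finset σ) (U : Matrix σ σ (MvPolynomial σ R)), U *ᵥ X = V *ᵥ X →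
      (∀ i ∉ s, U i = V i) → U.det - V.det ∈ Ideal.span (Set.range (V *ᵥ X)) from
    of_eq_off Finset.univ U h fun i hi => absurd (Finset.mem_univ i) hi
  intro s
  induction s using Finset.induction_on with
  | empty =>
    intro U _ hUV
    have : U = V := funext fun i => hUV i (Finset.notMem_empty i)
    simp [this]
  | insert j s _ ih =>
    intro U hU hUV
    have hrow : (U j - V j) ⬝ᵥ X = 0 := by
      rw [sub_dotProduct, sub_eq_zero]
      exact congrFun hU j
    have hdet : U.det = (U.updateRow j (V j)).det + (U.updateRow j (U j - V j)).det := by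
      rw [← det_updateRow_add, add_sub_cancel, updateRow_eq_self]
    rw [hdet, add_sub_right_comm]
    refine add_mem (ih _ ?_ fun i hi => ?_)
      (det_updateRow_mem_of_dotProduct_X_eq_zero (fun i _ => ?_) hrow)
    · rw [updateRow_mulVec, hU]
      exact Function.update_eq_self j _
    · obtain rfl | hij := eq_or_ne i j
      · simp
      · rw [updateRow_ne hij, hUV i (by simp [hij, hi])]
    · rw [hU]
      exact Ideal.subset_span ⟨i, rfl⟩

theorem det_sub_det_mem_span_mulVec_X_sub_C {y : σ → R} {U V : Matrix σ σ (MvPolynomial σ R)}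
    (h : (U *ᵥ fun i => X i - C (y i)) = V *ᵥ fun i => X i - C (y i)) :
    U.det - V.det ∈ Ideal.span (Set.range (V *ᵥ fun i => X i - C (y i))) := by
  obtain ⟨τ, hτ⟩ := exists_ringEquiv_X_sub_C_eq_X y
  have hmulVec (W : Matrix σ σ (MvPolynomial σ R)) :
      (τ.mapMatrix W) *ᵥ X = τ ∘ (W *ᵥ fun i => X i - C (y i)) := by
    ext1 i
    simp only [mulVec, dotProduct, Function.comp_apply, map_sum, map_mul, hτ]
    rfl
  have hmem := det_sub_det_mem_span_mulVec_X (U := τ.mapMatrix U) (V := τ.mapMatrix V)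
    (by rw [hmulVec, hmulVec, h])
  rw [hmulVec, ← RingEquiv.map_det, ← RingEquiv.map_det, ← map_sub, Set.range_comp,
    ← Ideal.map_span, Ideal.mem_map_of_equiv] at hmem
  obtain ⟨x, hx, hxτ⟩ := hmem
  rwa [← τ.injective hxτ]

theorem diagonal_geomSum_mulVec_X_sub_C {y : σ → R} {c : σ → ℕ}
    (hy : ∀ i, y i ^ (c i + 1) = 0) :
    (diagonal (fun i => ∑ s ∈ Finset.range (c i + 1), X i ^ s * C (y i) ^ (c i - s)) *ᵥ
      fun i => X i - C (y i)) = fun i => X i ^ (c i + 1) := by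
  ext1 i
  have hgeom := (Commute.all (X i) (C (y i))).geom_sum₂_mul (c i + 1)
  rw [add_tsub_cancel_right] at hgeom
  rw [mulVec_diagonal, hgeom, ← C_pow, hy, C_0, sub_zero]

theorem det_mul_C_eval_mem_span_mulVec {y : σ → R} {g : σ → MvPolynomial σ R}
    (hg : ∀ i, eval y (g i) = 0) {a V : Matrix σ σ (MvPolynomial σ R)}
    (hV : (V *ᵥ fun i => X i - C (y i)) = a *ᵥ g) {F : MvPolynomial σ R}
    (hF : a.det * F ∈ Ideal.span (Set.range (a *ᵥ g))) :
    V.det * C (eval y F) ∈ Ideal.span (Set.range (a *ᵥ g)) := by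
  set J := Ideal.span (Set.range (a *ᵥ g))
  obtain ⟨b, hb⟩ : ∃ b : Matrix σ σ (MvPolynomial σ R), (b *ᵥ fun i => X i - C (y i)) = g := by
    choose b hb using fun i => Ideal.mem_span_range_iff_exists_fun.mp
      (sub_C_eval_mem_span_X_sub_C y (g i))
    simp only [hg, C_0, sub_zero] at hb
    exact ⟨b, funext hb⟩
  have hdet : (a * b).det - V.det ∈ J := by
    have := det_sub_det_mem_span_mulVec_X_sub_C (y := y) (U := a * b) (V := V)
      (by rw [← mulVec_mulVec, hb, hV])
    rwa [hV] at this
  have hmul : V.det * F ∈ J := by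
    have : V.det * F = b.det * (a.det * F) - ((a * b).det - V.det) * F := by
      rw [det_mul]
      ring
    rw [this]
    exact sub_mem (J.mul_mem_left _ hF) (J.mul_mem_right _ hdet)
  have hsub : V.det * (F - C (eval y F)) ∈ J := by
    have := det_mul_mem_span_mulVec V (sub_C_eval_mem_span_X_sub_C y F)
    rwa [hV] at this
  simpa [mul_sub] using sub_mem hmul hsub

theorem eval_eq_zero_of_det_mul_mem {y : σ → R} {g : σ → MvPolynomial σ R}
    (hg : ∀ i, eval y (g i) = 0) {c : σ → ℕ} {a : Matrix σ σ (MvPolynomial σ R)}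
    (ha : (a *ᵥ g) = fun i => X i ^ (c i + 1)) {F : MvPolynomial σ R}
    (hF : a.det * F ∈ Ideal.span (Set.range fun i => (X i : MvPolynomial σ R) ^ (c i + 1))) :
    eval y F = 0 := by
  have hy (i : σ) : y i ^ (c i + 1) = 0 := by
    have := congrArg (eval y) (congrFun ha i)
    simpa [mulVec, dotProduct, hg] using this.symm
  have hmem := det_mul_C_eval_mem_span_mulVec hg
    ((diagonal_geomSum_mulVec_X_sub_C hy).trans ha.symm) (by rwa [ha])
  rw [ha, det_diagonal, mem_span_range_X_pow_iff] at hmem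
  by_contra hne
  obtain ⟨i, hi⟩ := hmem (Finsupp.equivFunOnFinite.symm c)
    (by rwa [mem_support_iff, mul_comm, coeff_C_mul, coeff_prod_geomSum, mul_one])
  exact Nat.not_succ_le_self _ hi

theorem mem_span_range_of_det_mul_mem {g : σ → MvPolynomial σ R} {c : σ → ℕ}
    {a : Matrix σ σ (MvPolynomial σ R)} (ha : (a *ᵥ g) = fun i => X i ^ (c i + 1))
    {F : MvPolynomial σ R}
    (hF : a.det * F ∈ Ideal.span (Set.range fun i => (X i : MvPolynomial σ R) ^ (c i + 1))) :
    F ∈ Ideal.span (Set.range g) := by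
  let π := Ideal.Quotient.mkₐ R (Ideal.span (Set.range g))
  let ψ : MvPolynomial σ R →+* MvPolynomial σ (MvPolynomial σ R ⧸ Ideal.span (Set.range g)) :=
    map (algebraMap R _)
  have heval (f : MvPolynomial σ R) : eval (π ∘ X) (ψ f) = π f := by
    rw [eval_map, ← aeval_def, ← aeval_unique π]
  have hψa : (ψ.mapMatrix a *ᵥ (ψ ∘ g)) = fun i => X i ^ (c i + 1) := by
    ext1 i
    rw [RingHom.mapMatrix_apply, ← RingHom.map_mulVec, ha]
    simp [ψ]
  have hψF : (ψ.mapMatrix a).det * ψ F ∈ Ideal.span (Set.range fun i => X i ^ (c i + 1)) := by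
    rw [← RingHom.map_det, ← map_mul]
    have := Ideal.mem_map_of_mem ψ hF
    rw [Ideal.map_span, ← Set.range_comp] at this
    simpa [Function.comp_def, ψ] using this
  have hψg (i : σ) : eval (π ∘ X) (ψ (g i)) = 0 :=
    (heval _).trans (Ideal.Quotient.eq_zero_iff_mem.mpr (Ideal.subset_span ⟨i, rfl⟩))
  exact Ideal.Quotient.eq_zero_iff_mem.mp
    ((heval F).symm.trans (eval_eq_zero_of_det_mul_mem hψg hψa hψF))

end Determinants

section Homogeneous

variable {σ R M : Type*}

attribute [local instance] weightedGradedAlgebra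

theorem isWeightedHomogeneous_addMonoidHom_comp {N : Type*} [CommSemiring R]
    [AddCommMonoid M] [AddCommMonoid N] (φ : M →+ N) {d : σ → M} {f : MvPolynomial σ R} {n : M}
    (hf : IsWeightedHomogeneous d f n) : IsWeightedHomogeneous (φ ∘ d) f (φ n) := by
  intro s hs
  rw [← hf hs]
  simp [Finsupp.weight_apply, Finsupp.sum, map_sum]

theorem weightedHomogeneousComponent_mul_of_right [CommSemiring R] [AddCommGroup M]
    {d : σ → M} {g : MvPolynomial σ R} {e : M} (hg : IsWeightedHomogeneous d g e) (n : M)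
    (f : MvPolynomial σ R) :
    weightedHomogeneousComponent d n (f * g) = weightedHomogeneousComponent d (n - e) f * g := by
  classical
  have h := DirectSum.coe_decompose_mul_add_of_right_mem (weightedHomogeneousSubmodule R d)
    (i := n - e) (a := f) hg
  rw [sub_add_cancel] at h
  rw [← weightedDecomposition.decompose'_apply, ← weightedDecomposition.decompose'_apply]
  exact h

theorem exists_isWeightedHomogeneous_sum_mul_eq {ι : Type*} [Fintype ι] [CommSemiring R]
    [AddCommGroup M] {d : σ → M} {g : ι → MvPolynomial σ R} {e : ι → M}
    (hg : ∀ i, IsWeightedHomogeneous d (g i) (e i))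
    {f : MvPolynomial σ R} {n : M} (hf : IsWeightedHomogeneous d f n)
    (hmem : f ∈ Ideal.span (Set.range g)) :
    ∃ a : ι → MvPolynomial σ R,
      (∀ i, IsWeightedHomogeneous d (a i) (n - e i)) ∧ ∑ i, a i * g i = f := by
  obtain ⟨a, ha⟩ := Ideal.mem_span_range_iff_exists_fun.mp hmem
  refine ⟨fun i => weightedHomogeneousComponent d (n - e i) (a i),
    fun i => weightedHomogeneousComponent_isWeightedHomogeneous _ _, ?_⟩
  simp only [← weightedHomogeneousComponent_mul_of_right (hg _), ← map_sum, ha]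
  exact weightedHomogeneousComponent_eq_self hf

theorem isWeightedHomogeneous_det {ι : Type*} [Fintype ι] [DecidableEq ι] [CommRing R]
    [AddCommGroup M] {d : σ → M} {a : Matrix ι ι (MvPolynomial σ R)} {u v : ι → M}
    (ha : ∀ j i, IsWeightedHomogeneous d (a j i) (u j - v i)) :
    IsWeightedHomogeneous d a.det (∑ j, u j - ∑ i, v i) := by
  rw [det_apply]
  refine IsWeightedHomogeneous.sum _ _ _ fun τ _ => ?_
  have hprod : IsWeightedHomogeneous d (∏ i, a (τ i) i) (∑ i, (u (τ i) - v i)) :=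
    IsWeightedHomogeneous.prod _ _ _ fun i _ => ha _ _
  rw [Finset.sum_sub_distrib, Equiv.sum_comp τ u] at hprod
  obtain hτ | hτ := Int.units_eq_one_or (Equiv.Perm.sign τ)
  · simpa only [hτ, one_smul] using hprod
  · simpa only [hτ, Units.neg_smul, one_smul] using hprod.neg

theorem weightedHomogeneousComponent_aeval_X [CommSemiring R] [AddCommMonoid M]
    {d : σ → M} {j : σ} (hj : Function.Injective fun n : ℕ => n • d j) (q : Polynomial R) (n : ℕ) :
    weightedHomogeneousComponent d (n • d j) (Polynomial.aeval (X j) q) =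
      C (q.coeff n) * X j ^ n := by
  have hX (r : R) (l : ℕ) : IsWeightedHomogeneous d (C r * X j ^ l) (l • d j) :=
    ((isWeightedHomogeneous_X R d j).pow l).C_mul r
  induction q using Polynomial.induction_on' with
  | add p q hp hq => rw [map_add, map_add, hp, hq, Polynomial.coeff_add, C_add, add_mul]
  | monomial l r =>
    rw [Polynomial.aeval_monomial, Polynomial.coeff_monomial, algebraMap_eq]
    split_ifs with hln
    · rw [← hln]
      exact weightedHomogeneousComponent_eq_self (hX r l)
    · rw [C_0, zero_mul]
      exact (hX r l).weightedHomogeneousComponent_ne _ fun h => hln (hj h).symm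

theorem exists_X_pow_mem_span {ι : Type*} [CommRing R] [AddCommMonoid M]
    {d : σ → M} {g : ι → MvPolynomial σ R} {e : ι → M}
    (hg : ∀ i, IsWeightedHomogeneous d (g i) (e i))
    [Algebra.IsIntegral R (MvPolynomial σ R ⧸ Ideal.span (Set.range g))] {j : σ}
    (hj : Function.Injective fun n : ℕ => n • d j) :
    ∃ n : ℕ, X j ^ n ∈ Ideal.span (Set.range g) := by
  classical
  let π := Ideal.Quotient.mkₐ R (Ideal.span (Set.range g))
  obtain ⟨q, hmonic, hq⟩ := Algebra.IsIntegral.isIntegral (R := R) (π (X j))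
  have hmem : Polynomial.aeval (X j) q ∈ Ideal.span (Set.range g) := by
    rw [← Ideal.Quotient.eq_zero_iff_mem, ← hq]
    exact (Polynomial.aeval_algHom_apply π (X j) q).symm
  have hhom : (Ideal.span (Set.range g)).IsHomogeneous (weightedHomogeneousSubmodule R d) :=
    Ideal.homogeneous_span _ _ (Set.forall_mem_range.mpr fun i => ⟨e i, hg i⟩)
  have hcomp := weightedHomogeneousComponent_mem_of_mem R d hhom hmem (q.natDegree • d j)
  rw [weightedHomogeneousComponent_aeval_X hj, hmonic.coeff_natDegree, C_1, one_mul] at hcomp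
  exact ⟨q.natDegree, hcomp⟩

end Homogeneous

end WeightedMacaulay

open WeightedMacaulay

theorem weighted_homogeneous_above_socle_degree_mem_ideal_general {σ R M : Type*} [Fintype σ]
    [CommRing R] [AddCommGroup M] [PartialOrder M] [IsOrderedAddMonoid M] {d : σ → M}
    (hd : ∀ i, 0 < d i) {g : σ → MvPolynomial σ R} {e : σ → M}
    (hg : ∀ i, IsWeightedHomogeneous d (g i) (e i))
    [Algebra.IsIntegral R (MvPolynomial σ R ⧸ Ideal.span (Set.range g))]
    {F : MvPolynomial σ R} {m : M} (hF : IsWeightedHomogeneous d F m)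
    (hm : ∑ i, e i - ∑ i, d i < m) : F ∈ Ideal.span (Set.range g) := by
  classical
  choose c hc using fun j => exists_X_pow_mem_span hg (j := j)
    (nsmul_left_strictMono (hd j)).injective
  have hX (j : σ) : IsWeightedHomogeneous d (X j ^ (c j + 1) : MvPolynomial σ R)
      ((c j + 1) • d j) := (isWeightedHomogeneous_X R d j).pow _
  choose a ha hag using fun j => exists_isWeightedHomogeneous_sum_mul_eq hg (hX j)
    (Ideal.pow_mem_of_pow_mem _ (hc j) (Nat.le_succ _))
  have hdet : IsWeightedHomogeneous d (det a * F)
      (∑ j, (c j + 1) • d j - ∑ i, e i + m) := (isWeightedHomogeneous_det ha).mul hF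
  refine mem_span_range_of_det_mul_mem (funext hag)
    (mem_span_range_X_pow_of_isWeightedHomogeneous (fun i => (hd i).le) ?_ hdet)
  calc ∑ j, c j • d j = ∑ j, (c j + 1) • d j - ∑ i, e i + (∑ i, e i - ∑ i, d i) := by
        simp only [succ_nsmul, Finset.sum_add_distrib]
        abel
    _ < ∑ j, (c j + 1) • d j - ∑ i, e i + m := by gcongr

/-- **weighted Macaulay theorem.** Fix positive weights `d₁,…,d_k` on the
variables of `ℂ[X₁,…,X_k]`, and let `g₁,…,g_k` be weighted homogeneous of weighted degrees
`e₁,…,e_k` with `ℂ[X₁,…,X_k]/(g₁,…,g_k)` finite dimensional over `ℂ`.  Put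
`N = ∑ eᵢ − ∑ dᵢ`.  Then every weighted homogeneous polynomial of weighted degree
strictly greater than `N` lies in the ideal `(g₁,…,g_k)`. -/
theorem weighted_homogeneous_above_socle_degree_mem_ideal
    (k : ℕ) (d : Fin k → ℕ) (hd : ∀ i, 0 < d i)
    (g : Fin k → MvPolynomial (Fin k) ℂ) (e : Fin k → ℕ)
    (hg : ∀ i, MvPolynomial.IsWeightedHomogeneous d (g i) (e i))
    (hfin : FiniteDimensional ℂ (MvPolynomial (Fin k) ℂ ⧸ Ideal.span (Set.range g)))
    (F : MvPolynomial (Fin k) ℂ) (m : ℕ)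
    (hF : MvPolynomial.IsWeightedHomogeneous d F m)
    (hm : (∑ i, (e i : ℤ)) - (∑ i, (d i : ℤ)) < (m : ℤ)) :
    F ∈ Ideal.span (Set.range g) :=
  weighted_homogeneous_above_socle_degree_mem_ideal_general
    (fun i => Nat.cast_pos.mpr (hd i))
    (fun i => isWeightedHomogeneous_addMonoidHom_comp (Nat.castAddMonoidHom ℤ) (hg i))
    (isWeightedHomogeneous_addMonoidHom_comp (Nat.castAddMonoidHom ℤ) hF) hm
end

section
/- Let g₁,…,g_k ∈ ℂ[X₁,…,X_k] be polynomials such that R = ℂ[X₁,…,X_k]/(g₁,…,g_k) is finite dimensional as a ℂ-vector space, let Z ⊆ ℂᵏ be the (finite) set of common zeros of g₁,…,g_k, and for z ∈ Z let m_z ⊂ R be the maximal ideal of classes of polynomials vanishing at z and μ(z) = dim_ℂ of the localization of R at m_z. Then for every F ∈ ℂ[X₁,…,X_k], the trace of the ℂ-linear endomorphism of R given by multiplication by the class of F equals ∑_{z ∈ Z} μ(z) · F(z). -/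
/-!
A finite-dimensional algebra `A` over a field `K` is Artinian, hence the product of its
localizations at its finitely many primes, and traces add over the factors. If `K` is algebraically
closed, the primes of `A` are the kernels of the `K`-algebra homomorphisms `φ : A → K`. In the local
factor at `ker φ` the image of `a - φ a` is nilpotent, so it has trace zero, and `a` has the same
trace as the scalar `φ a`. For `A = K[X]/I` the homomorphisms `φ` are the evaluations at the common
zeros of `I`.
-/

section AlgebraTrace

variable {R : Type*} [CommRing R]

theorem algebra_trace_pi_apply {ι : Type*} [Fintype ι] {S : ι → Type*} [∀ i, CommRing (S i)]
    [∀ i, Algebra R (S i)] [∀ i, Module.Free R (S i)] [∀ i, Module.Finite R (S i)]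
    (x : Π i, S i) :
    Algebra.trace R (Π i, S i) x = ∑ i, Algebra.trace R (S i) (x i) := by
  classical
  let b := fun i => Module.Free.chooseBasis R (S i)
  rw [Algebra.trace_eq_matrix_trace (Pi.basis b), Matrix.trace, Fintype.sum_sigma]
  refine Finset.sum_congr rfl fun i _ => ?_
  rw [Algebra.trace_eq_matrix_trace (b i), Matrix.trace]
  refine Finset.sum_congr rfl fun j _ => ?_
  simp [Algebra.leftMulMatrix_eq_repr_mul, Pi.basis_apply]

theorem algebra_trace_eq_finrank_mul_of_isNilpotent_sub [IsReduced R] [StrongRankCondition R]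
    {S : Type*} [CommRing S] [Algebra R S] [Module.Free R S] {s : S} {c : R}
    (h : IsNilpotent (s - algebraMap R S c)) :
    Algebra.trace R S s = Module.finrank R S * c := by
  have htrace : Algebra.trace R S (s - algebraMap R S c) = 0 :=
    (Algebra.isNilpotent_trace_of_isNilpotent h).eq_zero
  rwa [map_sub, Algebra.trace_algebraMap, sub_eq_zero, nsmul_eq_mul] at htrace

end AlgebraTrace

section Localization

variable {A : Type*} [CommRing A]

theorem finite_localization_of_isArtinianRing (R : Type*) [CommSemiring R] [Algebra R A]
    [Module.Finite R A] [IsArtinianRing A] (M : Submonoid A) :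
    Module.Finite R (Localization M) :=
  .of_surjective (IsScalarTower.toAlgHom R A (Localization M)).toLinearMap
    (IsArtinianRing.localization_surjective M _)

theorem isNilpotent_algebraMap_localization_of_mem_minimalPrimes {p : Ideal A} [p.IsPrime]
    (hp : p ∈ minimalPrimes A) {a : A} (ha : a ∈ p) :
    IsNilpotent (algebraMap A (Localization.AtPrime p) a) := by
  have : Ring.KrullDimLE 0 (Localization.AtPrime p) := .of_isLocalization p hp _
  rwa [Ring.KrullDimLE.isNilpotent_iff_mem_maximalIdeal,
    IsLocalization.AtPrime.to_map_mem_maximal_iff _ p]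

end Localization

section FiniteDimensional

variable {K A : Type*} [Field K] [CommRing A] [Algebra K A] [FiniteDimensional K A]

theorem algebra_trace_eq_sum_trace_localization [Fintype (PrimeSpectrum A)] (a : A) :
    Algebra.trace K A a = ∑ p : PrimeSpectrum A,
      Algebra.trace K (Localization.AtPrime p.asIdeal) (algebraMap A _ a) := by
  have : IsArtinianRing A := .of_finite K A
  have (p : PrimeSpectrum A) : Module.Finite K (Localization.AtPrime p.asIdeal) :=
    finite_localization_of_isArtinianRing K _
  rw [← Algebra.trace_eq_of_algEquiv ((PrimeSpectrum.toPiLocalizationEquiv A).restrictScalars K) a]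
  exact algebra_trace_pi_apply _

theorem algebra_trace_localization_eq_finrank_mul {p : Ideal A} [p.IsPrime] {a : A} {c : K}
    (h : a - algebraMap K A c ∈ p) :
    Algebra.trace K (Localization.AtPrime p) (algebraMap A _ a) =
      Module.finrank K (Localization.AtPrime p) * c := by
  have : IsArtinianRing A := .of_finite K A
  have hnil := isNilpotent_algebraMap_localization_of_mem_minimalPrimes
    (Ideal.mem_minimalPrimes_of_krullDimLE_zero p) h
  rw [map_sub, ← IsScalarTower.algebraMap_apply] at hnil
  exact algebra_trace_eq_finrank_mul_of_isNilpotent_sub hnil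

end FiniteDimensional

section RationalPoints

variable {K A : Type*} [Field K] [CommRing A] [Algebra K A]

/-- The point of `Spec A` underlying a `K`-rational point `φ : A →ₐ[K] K`. -/
def kerPoint (φ : A →ₐ[K] K) : PrimeSpectrum A :=
  ⟨RingHom.ker φ, RingHom.ker_isPrime φ⟩

theorem sub_algebraMap_apply_mem_kerPoint (φ : A →ₐ[K] K) (a : A) :
    a - algebraMap K A (φ a) ∈ (kerPoint φ).asIdeal := by
  simp [kerPoint, RingHom.mem_ker]

theorem kerPoint_injective : Function.Injective (kerPoint : (A →ₐ[K] K) → PrimeSpectrum A) := by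
  intro φ ψ h
  ext a
  have hmem := sub_algebraMap_apply_mem_kerPoint φ a
  rw [h] at hmem
  simpa [kerPoint, RingHom.mem_ker, sub_eq_zero, eq_comm (a := ψ a)] using hmem

theorem kerPoint_surjective [IsAlgClosed K] [Algebra.IsIntegral K A] :
    Function.Surjective (kerPoint : (A →ₐ[K] K) → PrimeSpectrum A) := by
  intro p
  let residueEquiv : K ≃ₐ[K] A ⧸ p.asIdeal :=
    .ofBijective (Algebra.ofId K _) IsAlgClosed.algebraMap_bijective_of_isIntegral
  refine ⟨residueEquiv.symm.toAlgHom.comp (Ideal.Quotient.mkₐ K p.asIdeal), ?_⟩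
  ext a
  simp [kerPoint, RingHom.mem_ker, Ideal.Quotient.eq_zero_iff_mem]

theorem algebra_trace_eq_sum_algHom [IsAlgClosed K] [FiniteDimensional K A]
    [Fintype (A →ₐ[K] K)] (a : A) :
    Algebra.trace K A a = ∑ φ : A →ₐ[K] K,
      Module.finrank K (Localization.AtPrime (kerPoint φ).asIdeal) * φ a := by
  have hker : Function.Bijective (kerPoint : (A →ₐ[K] K) → PrimeSpectrum A) :=
    ⟨kerPoint_injective, kerPoint_surjective⟩
  have : Fintype (PrimeSpectrum A) := .ofBijective _ hker
  rw [algebra_trace_eq_sum_trace_localization, ← hker.sum_comp]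
  exact Fintype.sum_congr _ _ fun φ =>
    algebra_trace_localization_eq_finrank_mul (sub_algebraMap_apply_mem_kerPoint φ a)

end RationalPoints

section ZeroLocus

open MvPolynomial

variable {k K σ : Type*} [Field k] [Field K] [Algebra k K]

/-- The correspondence between the common zeros of an ideal `I` of `k[X]` with coordinates in `K`
and the `K`-points of `k[X]/I`, sending a zero to the evaluation at it. -/
noncomputable def zeroLocusEquivAlgHom (I : Ideal (MvPolynomial σ k)) :
    zeroLocus K I ≃ (MvPolynomial σ k ⧸ I →ₐ[k] K) where
  toFun z := Ideal.Quotient.liftₐ I (aeval z.1) z.2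
  invFun φ := ⟨fun i => φ (Ideal.Quotient.mk I (X i)), fun f hf => by
    have haeval : aeval (fun i => φ (Ideal.Quotient.mk I (X i))) =
        φ.comp (Ideal.Quotient.mkₐ k I) := by ext; simp
    simp [haeval, Ideal.Quotient.eq_zero_iff_mem.2 hf]⟩
  left_inv z := Subtype.ext (funext fun i => aeval_X _ i)
  right_inv φ := Ideal.Quotient.algHom_ext _ (algHom_ext fun i => aeval_X _ i)

theorem zeroLocusEquivAlgHom_apply_mk (I : Ideal (MvPolynomial σ k)) (z : zeroLocus K I)
    (f : MvPolynomial σ k) :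
    zeroLocusEquivAlgHom I z (Ideal.Quotient.mk I f) = aeval z.1 f :=
  rfl

theorem ker_zeroLocusEquivAlgHom (I : Ideal (MvPolynomial σ k)) (z : zeroLocus K I) :
    RingHom.ker (zeroLocusEquivAlgHom I z) =
      (RingHom.ker (aeval (R := k) z.1)).map (Ideal.Quotient.mk I) :=
  Ideal.ker_quotient_lift _ _

end ZeroLocus

theorem trace_of_multiplication_eq_sum_local_multiplicities_general {K σ : Type*} [Field K]
    [IsAlgClosed K] (I : Ideal (MvPolynomial σ K)) [FiniteDimensional K (MvPolynomial σ K ⧸ I)]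
    (Z : Finset (σ → K)) (hZ : ∀ z, z ∈ Z ↔ z ∈ MvPolynomial.zeroLocus K I)
    (m : Z → PrimeSpectrum (MvPolynomial σ K ⧸ I))
    (hm : ∀ z : Z, (m z).asIdeal =
      (RingHom.ker (MvPolynomial.eval z.1)).map (Ideal.Quotient.mk I))
    (F : MvPolynomial σ K) :
    LinearMap.trace K (MvPolynomial σ K ⧸ I) (LinearMap.mulLeft K (Ideal.Quotient.mk I F)) =
      ∑ z : Z, (Module.finrank K (Localization.AtPrime (m z).asIdeal) : K) *
        MvPolynomial.eval z.1 F := by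
  let points : Z ≃ (MvPolynomial σ K ⧸ I →ₐ[K] K) :=
    (Equiv.subtypeEquivRight hZ).trans (zeroLocusEquivAlgHom I)
  have hker_points (z : Z) : kerPoint (points z) = m z :=
    PrimeSpectrum.ext ((ker_zeroLocusEquivAlgHom I _).trans (hm z).symm)
  have heval_points (z : Z) : points z (Ideal.Quotient.mk I F) = MvPolynomial.eval z.1 F :=
    zeroLocusEquivAlgHom_apply_mk I _ F
  have : Fintype (MvPolynomial σ K ⧸ I →ₐ[K] K) := .ofEquiv _ points
  calc LinearMap.trace K _ (LinearMap.mulLeft K (Ideal.Quotient.mk I F))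
      = ∑ φ : MvPolynomial σ K ⧸ I →ₐ[K] K,
          Module.finrank K (Localization.AtPrime (kerPoint φ).asIdeal) *
            φ (Ideal.Quotient.mk I F) := algebra_trace_eq_sum_algHom _
    _ = ∑ z : Z, Module.finrank K (Localization.AtPrime (kerPoint (points z)).asIdeal) *
          points z (Ideal.Quotient.mk I F) := (points.sum_comp _).symm
    _ = _ := Fintype.sum_congr _ _ fun z => by rw [hker_points, heval_points]

/-- Let `g₁,…,g_k ∈ ℂ[X₁,…,X_k]` with `R = ℂ[X₁,…,X_k]/(g₁,…,g_k)`
finite dimensional over `ℂ`, let `Z` be the finite set of common zeros of the `gᵢ`, and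
for `z ∈ Z` let `m_z ⊂ R` be the maximal ideal of classes of polynomials vanishing at `z`
and `μ(z) = dim_ℂ R_{m_z}` the local multiplicity.  Then for every polynomial `F`, the
trace of multiplication by the class of `F` on `R` is `∑_{z ∈ Z} μ(z) · F(z)`. -/
theorem trace_of_multiplication_eq_sum_local_multiplicities
    (k : ℕ) (g : Fin k → MvPolynomial (Fin k) ℂ)
    (I : Ideal (MvPolynomial (Fin k) ℂ)) (hI : I = Ideal.span (Set.range g))
    (hfin : FiniteDimensional ℂ (MvPolynomial (Fin k) ℂ ⧸ I))
    (Z : Finset (Fin k → ℂ))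
    (hZ : ∀ z : Fin k → ℂ, z ∈ Z ↔ ∀ i, MvPolynomial.eval z (g i) = 0)
    (m : (Fin k → ℂ) → Ideal (MvPolynomial (Fin k) ℂ ⧸ I))
    (hm : ∀ z, m z = (RingHom.ker (MvPolynomial.eval z)).map (Ideal.Quotient.mk I))
    (hprime : ∀ z ∈ Z, (m z).IsPrime)
    (F : MvPolynomial (Fin k) ℂ) :
    LinearMap.trace ℂ (MvPolynomial (Fin k) ℂ ⧸ I)
        (LinearMap.mulLeft ℂ (Ideal.Quotient.mk I F)) =
      ∑ z ∈ Z.attach,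
        (Module.finrank ℂ (Localization (@Ideal.primeCompl _ _ (m z.1) (hprime z.1 z.2))) : ℂ) *
          MvPolynomial.eval z.1 F := by
  subst hI
  exact trace_of_multiplication_eq_sum_local_multiplicities_general _ Z
    (fun z => by simp [hZ, MvPolynomial.zeroLocus_span, MvPolynomial.aeval_eq_eval])
    (fun z => ⟨m z.1, hprime z.1 z.2⟩) (fun z => hm z) F
end

section
/- Let g₁,…,g_k ∈ ℂ[X₁,…,X_k] be polynomials such that R = ℂ[X₁,…,X_k]/(g₁,…,g_k) is finite dimensional as a ℂ-vector space, and let Z ⊆ ℂᵏ be the (finite) set of common zeros of g₁,…,g_k. Then the number of points of Z is at most dim_ℂ R, with equality if and only if the Jacobian determinant det(∂gᵢ/∂Xⱼ) is nonzero at every point of Z (i.e., if and only if 0 is a regular value of the map g = (g₁,…,g_k) : ℂᵏ → ℂᵏ). -/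
/-!
Write `R = K[X]/I` with `I` generated by the `gᵢ`. Interpolation identifies the quotient of `K[X]`
by the vanishing ideal of the finite set `Z` with `K^Z`, so `R` surjects onto an algebra of
dimension `#Z`, and equality of dimensions means that `I` is this vanishing ideal. By the
Nullstellensatz the latter is the radical of `I`, so equality holds iff `R` is reduced. Over a
perfect field, a finite algebra is reduced iff its module of Kähler differentials vanishes. For
`R` this module is the cokernel of the (square) Jacobian matrix, so it vanishes iff the Jacobian
determinant is a unit of `R`, and by the Nullstellensatz once more, iff the determinant vanishes
at no point of `Z`.
-/

open MvPolynomial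
open scoped KaehlerDifferential

section Jacobian

variable {R S σ τ : Type*} [CommRing R] [CommRing S] [Algebra R S]

/-- The matrix of formal partial derivatives of a family of polynomials, with one row for each
polynomial and one column for each variable. -/
noncomputable def jacobianMatrix (g : τ → MvPolynomial σ R) : Matrix τ σ (MvPolynomial σ R) :=
  Matrix.of fun i j ↦ pderiv j (g i)

theorem formallyUnramified_iff_span_row_jacobianMatrix_eq_top [Finite σ]
    (P : Algebra.Presentation R S σ τ) :
    Algebra.FormallyUnramified R S ↔
      Submodule.span S (Set.range
        ((jacobianMatrix P.relation).map (algebraMap P.Ring S)).row) = ⊤ := by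
  let e : (σ →₀ S) ≃ₗ[S] (σ → S) := Finsupp.linearEquivFunOnFinite S S σ
  let π : (σ →₀ S) →ₗ[S] Ω[S⁄R] := P.differentialsSolution.π
  let d : τ → σ →₀ S := P.differentialsRelations.relation
  have π_surjective : Function.Surjective π := P.differentialsSolution_isPresentation.surjective_π
  have ker_π : LinearMap.ker π = Submodule.span S (Set.range d) :=
    P.differentialsSolution_isPresentation.ker_π
  have e_comp_d : e ∘ d = ((jacobianMatrix P.relation).map (algebraMap P.Ring S)).row := by
    ext i j
    simp [e, d, jacobianMatrix, Algebra.Presentation.differentialsRelations]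
  calc Algebra.FormallyUnramified R S
    _ ↔ Subsingleton Ω[S⁄R] := Algebra.formallyUnramified_iff R S
    _ ↔ LinearMap.ker π = ⊤ := by
        rw [LinearMap.ker_eq_top, ← LinearMap.range_eq_bot, LinearMap.range_eq_top.2 π_surjective,
          eq_comm, subsingleton_iff_bot_eq_top, Submodule.subsingleton_iff]
    _ ↔ _ := by
        rw [ker_π, ← e_comp_d, Set.range_comp, ← LinearEquiv.coe_coe, ← Submodule.map_span,
          Submodule.map_eq_top_iff]

theorem formallyUnramified_iff_isUnit_det_jacobianMatrix [Fintype σ] [DecidableEq σ]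
    (P : Algebra.Presentation R S σ σ) :
    Algebra.FormallyUnramified R S ↔
      IsUnit (algebraMap P.Ring S (jacobianMatrix P.relation).det) := by
  rw [formallyUnramified_iff_span_row_jacobianMatrix_eq_top P, ← range_vecMulLinear,
    LinearMap.range_eq_top, Matrix.coe_vecMulLinear, Matrix.vecMul_surjective_iff_isUnit,
    Matrix.isUnit_iff_isUnit_det, RingHom.map_det, RingHom.mapMatrix_apply]

end Jacobian

theorem isReduced_iff_formallyUnramified (K A : Type*) [Field K] [PerfectField K] [CommRing A]
    [Algebra K A] [Module.Finite K A] :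
    IsReduced A ↔ Algebra.FormallyUnramified K A := by
  refine ⟨fun _ ↦ ?_, fun _ ↦ Algebra.FormallyUnramified.isReduced_of_field K A⟩
  have : IsArtinianRing A := .of_finite K A
  have (m : MaximalSpectrum A) : Algebra.FormallyUnramified K (A ⧸ m.asIdeal) :=
    let := Ideal.Quotient.field m.asIdeal
    .of_isSeparable K _
  exact .of_equiv ((IsArtinianRing.equivPi A).restrictScalars K).symm

section Quotient

variable {K A : Type*} [Field K] [CommRing A] [Algebra K A] {I J : Ideal A}
  [Module.Finite K (A ⧸ I)]

theorem finrank_quotient_le_of_le (h : I ≤ J) :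
    Module.finrank K (A ⧸ J) ≤ Module.finrank K (A ⧸ I) :=
  LinearMap.finrank_le_finrank_of_surjective (f := (Ideal.Quotient.factorₐ K h).toLinearMap)
    (Ideal.Quotient.factor_surjective h)

theorem finrank_quotient_eq_iff_of_le (h : I ≤ J) :
    Module.finrank K (A ⧸ J) = Module.finrank K (A ⧸ I) ↔ J = I := by
  refine ⟨fun hrank ↦ le_antisymm (fun f hf ↦ ?_) h, fun hIJ ↦ by rw [hIJ]⟩
  have factor_injective : Function.Injective (Ideal.Quotient.factorₐ K h).toLinearMap :=
    have : Module.Finite K (A ⧸ J) := .of_surjective (Ideal.Quotient.factorₐ K h).toLinearMap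
      (Ideal.Quotient.factor_surjective h)
    (LinearMap.injective_iff_surjective_of_finrank_eq_finrank hrank.symm).2
      (Ideal.Quotient.factor_surjective h)
  rw [← Ideal.Quotient.eq_zero_iff_mem] at hf ⊢
  exact factor_injective (by simpa using hf)

end Quotient

section Points

variable {σ K : Type*} [Field K]

theorem vanishingIdeal_singleton_injective :
    Function.Injective fun z : σ → K ↦ vanishingIdeal K {z} := by
  intro z w h
  ext i
  have mem_z : (X i - C (z i) : MvPolynomial σ K) ∈ vanishingIdeal K {z} := by
    simp
  have mem_w : (X i - C (z i) : MvPolynomial σ K) ∈ vanishingIdeal K {w} := h.le mem_z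
  simpa [mem_vanishingIdeal_singleton_iff, sub_eq_zero, eq_comm] using mem_w

/-- Restriction of polynomials to functions on a set `V` of `K`-points; it identifies the coordinate
ring of a finite `V` with `V → K`. -/
noncomputable def evalOn (V : Set (σ → K)) : MvPolynomial σ K →ₐ[K] V → K :=
  AlgHom.pi fun z ↦ aeval z.1

@[simp]
theorem evalOn_apply (V : Set (σ → K)) (f : MvPolynomial σ K) (z : V) :
    evalOn V f z = eval z.1 f := by
  simp [evalOn]

theorem ker_evalOn (V : Set (σ → K)) : RingHom.ker (evalOn V) = vanishingIdeal K V := by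
  ext f
  simp [RingHom.mem_ker, funext_iff]

theorem evalOn_surjective (V : Set (σ → K)) [Finite V] : Function.Surjective (evalOn V) := by
  intro c
  obtain ⟨f, hf⟩ := Ideal.exists_forall_sub_mem_ideal
    (I := fun z : V ↦ vanishingIdeal K {z.1})
    (fun z w hzw ↦ Ideal.isCoprime_of_isMaximal <|
      vanishingIdeal_singleton_injective.ne (Subtype.coe_ne_coe.2 hzw))
    (fun z ↦ C (c z))
  refine ⟨f, funext fun z ↦ ?_⟩
  simpa [mem_vanishingIdeal_singleton_iff, sub_eq_zero] using hf z

theorem finrank_quotient_vanishingIdeal (V : Set (σ → K)) [Finite V] :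
    Module.finrank K (MvPolynomial σ K ⧸ vanishingIdeal K V) = V.ncard := by
  have := Fintype.ofFinite V
  rw [← ker_evalOn,
    (Ideal.quotientKerAlgEquivOfSurjective (evalOn_surjective V)).toLinearEquiv.finrank_eq,
    Module.finrank_fintype_fun_eq_card, ← Nat.card_eq_fintype_card, Nat.card_coe_set_eq]

theorem ncard_le_finrank_quotient_of_subset_zeroLocus {I : Ideal (MvPolynomial σ K)}
    [Module.Finite K (MvPolynomial σ K ⧸ I)] {V : Set (σ → K)} [Finite V]
    (hV : V ⊆ zeroLocus K I) : V.ncard ≤ Module.finrank K (MvPolynomial σ K ⧸ I) := by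
  rw [← finrank_quotient_vanishingIdeal]
  exact finrank_quotient_le_of_le (le_zeroLocus_iff_le_vanishingIdeal.1 hV)

end Points

section AlgClosed

variable {σ K : Type*} [Finite σ] [Field K] [IsAlgClosed K] {I : Ideal (MvPolynomial σ K)}

theorem isUnit_mk_iff_forall_mem_zeroLocus_eval_ne_zero {f : MvPolynomial σ K} :
    IsUnit (Ideal.Quotient.mk I f) ↔ ∀ z ∈ zeroLocus K I, eval z f ≠ 0 := by
  constructor
  · intro hf z hz
    exact (hf.map (Ideal.Quotient.liftₐ I (aeval z) hz)).ne_zero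
  · intro hf
    by_contra hunit
    obtain ⟨M, hM, hfM⟩ := exists_max_ideal_of_mem_nonunits hunit
    have comap_isMaximal : (M.comap (Ideal.Quotient.mk I)).IsMaximal :=
      Ideal.comap_isMaximal_of_surjective _ Ideal.Quotient.mk_surjective
    obtain ⟨z, hz⟩ := isMaximal_iff_eq_vanishingIdeal_singleton.1 comap_isMaximal
    have mem_iff (p : MvPolynomial σ K) : Ideal.Quotient.mk I p ∈ M ↔ eval z p = 0 := by
      rw [← Ideal.mem_comap, hz, mem_vanishingIdeal_singleton_iff, aeval_eq_eval]
    refine hf z (fun p hp ↦ ?_) ((mem_iff f).1 hfM)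
    exact (mem_iff p).1 (by simp [Ideal.Quotient.eq_zero_iff_mem.2 hp])

theorem finite_quotient_of_finite_zeroLocus (hI : (zeroLocus K I).Finite) :
    Module.Finite K (MvPolynomial σ K ⧸ I) := by
  suffices Algebra.IsIntegral K (MvPolynomial σ K ⧸ I) from Algebra.IsIntegral.finite
  refine ⟨fun x ↦ ?_⟩
  obtain ⟨f, rfl⟩ := Ideal.Quotient.mk_surjective x
  let q : Polynomial K := ∏ z ∈ hI.toFinset, (.X - .C (eval z f))
  have q_monic : q.Monic := Polynomial.monic_prod_X_sub_C _ _
  have q_mem_radical : Polynomial.aeval f q ∈ I.radical := by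
    rw [← vanishingIdeal_zeroLocus_eq_radical (K := K)]
    intro z hz
    rw [← Polynomial.aeval_algHom_apply, map_prod]
    exact Finset.prod_eq_zero (hI.mem_toFinset.2 hz) (by simp)
  obtain ⟨n, hn⟩ := q_mem_radical
  refine ⟨q ^ n, q_monic.pow n, ?_⟩
  rw [← Polynomial.aeval_def, ← Ideal.Quotient.mkₐ_eq_mk K, Polynomial.aeval_algHom_apply, map_pow]
  exact Ideal.Quotient.eq_zero_iff_mem.2 hn

theorem ncard_zeroLocus_eq_finrank_quotient_iff (hI : (zeroLocus K I).Finite) :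
    (zeroLocus K I).ncard = Module.finrank K (MvPolynomial σ K ⧸ I) ↔ I.IsRadical := by
  have := hI.to_subtype
  have := finite_quotient_of_finite_zeroLocus hI
  rw [← finrank_quotient_vanishingIdeal,
    finrank_quotient_eq_iff_of_le (le_vanishingIdeal_zeroLocus I),
    vanishingIdeal_zeroLocus_eq_radical, Ideal.radical_eq_iff]

end AlgClosed

theorem card_zeros_le_dim_quotient_iff_regular_general {σ K : Type*} [Fintype σ] [DecidableEq σ]
    [Field K] [IsAlgClosed K] (g : σ → MvPolynomial σ K) (Z : Finset (σ → K))
    (hZ : ∀ z, z ∈ Z ↔ ∀ i, eval z (g i) = 0) :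
    Z.card ≤ Module.finrank K (MvPolynomial σ K ⧸ Ideal.span (Set.range g)) ∧
    (Z.card = Module.finrank K (MvPolynomial σ K ⧸ Ideal.span (Set.range g)) ↔
      ∀ z ∈ Z, eval z (jacobianMatrix g).det ≠ 0) := by
  set I := Ideal.span (Set.range g) with hI
  have zeroLocus_eq : zeroLocus K I = Z := by
    ext z
    simp [hI, zeroLocus_span, hZ]
  have zeroLocus_finite : (zeroLocus K I).Finite := zeroLocus_eq ▸ Z.finite_toSet
  have := zeroLocus_finite.to_subtype
  have := finite_quotient_of_finite_zeroLocus zeroLocus_finite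
  rw [← Set.ncard_coe_finset, ← zeroLocus_eq]
  refine ⟨ncard_le_finrank_quotient_of_subset_zeroLocus subset_rfl, ?_⟩
  calc (zeroLocus K I).ncard = Module.finrank K (MvPolynomial σ K ⧸ I)
    _ ↔ I.IsRadical := ncard_zeroLocus_eq_finrank_quotient_iff zeroLocus_finite
    _ ↔ IsReduced (MvPolynomial σ K ⧸ I) := Ideal.isRadical_iff_quotient_reduced I
    _ ↔ Algebra.FormallyUnramified K (MvPolynomial σ K ⧸ I) := isReduced_iff_formallyUnramified K _
    _ ↔ IsUnit (Ideal.Quotient.mk I (jacobianMatrix g).det) :=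
        formallyUnramified_iff_isUnit_det_jacobianMatrix .naive
    _ ↔ ∀ z ∈ zeroLocus K I, eval z (jacobianMatrix g).det ≠ 0 :=
        isUnit_mk_iff_forall_mem_zeroLocus_eval_ne_zero
    _ ↔ ∀ z ∈ Z, eval z (jacobianMatrix g).det ≠ 0 := by
        simp only [zeroLocus_eq, Finset.mem_coe]

/-- Let `g₁,…,g_k ∈ ℂ[X₁,…,X_k]` with `R = ℂ[X₁,…,X_k]/(g₁,…,g_k)`
finite dimensional over `ℂ`, and let `Z` be the (finite) set of common zeros of the `gᵢ`.
Then `#Z ≤ dim_ℂ R`, with equality if and only if the Jacobian determinant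
`det(∂gᵢ/∂Xⱼ)` is nonzero at every point of `Z` (i.e. `0` is a regular value of `g`). -/
theorem card_zeros_le_dim_quotient_iff_regular
    (k : ℕ) (g : Fin k → MvPolynomial (Fin k) ℂ)
    (I : Ideal (MvPolynomial (Fin k) ℂ)) (hI : I = Ideal.span (Set.range g))
    (hfin : FiniteDimensional ℂ (MvPolynomial (Fin k) ℂ ⧸ I))
    (Z : Finset (Fin k → ℂ))
    (hZ : ∀ z : Fin k → ℂ, z ∈ Z ↔ ∀ i, MvPolynomial.eval z (g i) = 0) :
    Z.card ≤ Module.finrank ℂ (MvPolynomial (Fin k) ℂ ⧸ I) ∧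
    (Z.card = Module.finrank ℂ (MvPolynomial (Fin k) ℂ ⧸ I) ↔
      ∀ z ∈ Z,
        MvPolynomial.eval z
          (Matrix.det (Matrix.of fun i j : Fin k => MvPolynomial.pderiv j (g i))) ≠ 0) := by
  subst hI
  exact card_zeros_le_dim_quotient_iff_regular_general g Z hZ
end

section
/- Let 1 ≤ k ≤ n and let c ∈ ℂ with c ≠ 0. Then the polynomial system Y_{n−k+1} = 0, …, Y_{n−1} = 0, Yₙ + c = 0 has exactly binomial(n, k) solutions in ℂᵏ, and at every solution the Jacobian determinant of the map (Y_{n−k+1}, …, Y_{n−1}, Yₙ + c) : ℂᵏ → ℂᵏ is nonzero. -/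
/-- The Segre polynomials `Y_j ∈ ℂ[X₁,…,X_k]`: `Y₀ = 1` and
`Y_j = -∑_{i=1}^{min(j,k)} Xᵢ · Y_{j-i}` for `j ≥ 1`. -/
noncomputable def segreY (k : ℕ) : ℕ → MvPolynomial (Fin k) ℂ
  | 0 => 1
  | j + 1 =>
    -∑ i : Fin (min (j + 1) k),
      MvPolynomial.X (Fin.castLE (min_le_right (j + 1) k) i) * segreY k (j - i.val)
  decreasing_by omega

/-- The quantum relations of `G(k,n)`: the polynomial map
`(Y_{n-k+1}, …, Y_{n-1}, Yₙ + c) : ℂᵏ → ℂᵏ`. -/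
noncomputable def quantumRelation (k n : ℕ) (c : ℂ) (i : Fin k) : MvPolynomial (Fin k) ℂ :=
  if i.val + 1 < k then segreY k (n - k + 1 + i.val) else segreY k n + MvPolynomial.C c

/-!
Encode `x ∈ ℂᵏ` as the polynomial `P = 1 + x₁ t + ⋯ + x_k tᵏ`, and put `F = 1 + c tⁿ`. The recursion
says that `S = ∑ Y_j(x) tʲ` is the inverse of `P` as a power series, so the relations are the
coefficients of `S F` in the `k` degrees `n - k + 1, …, n`. If they vanish, the truncation `Q` of
`S F` to degree at most `n - k` satisfies `P Q = F` up to degree `n`, hence exactly, as both sides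
have degree at most `n`. So the solutions are the factors of `F` of degree `k` with constant term
`1`, and as `F` has `n` distinct nonzero roots, these correspond to the `k`-element sets of roots.

Differentiating `P S = 1` gives `∂S/∂X_l = -tˡ S²`. So if `v` lies in the kernel of the Jacobian at
a solution and `W = ∑ v_l tˡ⁻¹`, then `t W S²` has no terms in degrees `n - k + 1, …, n`. Since
`S Q = S² F` agrees with `S²` below degree `n`, the same is true of `S (t W Q)`, and the truncation
argument, with `t W Q` in place of `F`, shows that `P` divides `t W Q`. But `P` is coprime to `t`
and, `F = P Q` being separable, to `Q`; so `P` divides `W`, which has smaller degree, and `v = 0`.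
-/

open Polynomial
open scoped PowerSeries

section Cofactor

variable {R : Type*} [CommRing R]

lemma exists_natDegree_le_mul_eq_iff_coeff {P F : R[X]} {S : R⟦X⟧} {d k : ℕ}
    (hPS : (P : R⟦X⟧) * S = 1) (hP : P.natDegree ≤ k) (hF : F.natDegree ≤ d + k) :
    (∃ Q : R[X], Q.natDegree ≤ d ∧ P * Q = F) ↔
      ∀ i : Fin k, PowerSeries.coeff (d + 1 + i) (S * (F : R⟦X⟧)) = 0 := by
  constructor
  · rintro ⟨Q, hQ, rfl⟩ i
    have hSF : S * ((P * Q : R[X]) : R⟦X⟧) = Q := by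
      rw [coe_mul]
      linear_combination (Q : R⟦X⟧) * hPS
    rw [hSF, coeff_coe, coeff_eq_zero_of_natDegree_lt (by omega)]
  · intro hcoeff
    set T : R⟦X⟧ := S * (F : R⟦X⟧) with hT
    have hPT : (P : R⟦X⟧) * T = F := by rw [hT, ← mul_assoc, hPS, one_mul]
    have htrunc : T.trunc (d + k + 1) = T.trunc (d + 1) := by
      ext m
      simp only [PowerSeries.coeff_trunc]
      split_ifs with hm hm' hm'
      · rfl
      · simpa [show d + 1 + (m - (d + 1)) = m by omega] using hcoeff ⟨m - (d + 1), by omega⟩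
      · omega
      · rfl
    have hdeg : (T.trunc (d + 1)).natDegree ≤ d :=
      Nat.lt_succ_iff.1 (PowerSeries.natDegree_trunc_lt _ _)
    refine ⟨T.trunc (d + 1), hdeg, ?_⟩
    calc P * T.trunc (d + 1)
        = PowerSeries.trunc (d + k + 1) ((P : R⟦X⟧) * (T.trunc (d + k + 1) : R⟦X⟧)) := by
          rw [htrunc, ← coe_mul, PowerSeries.trunc_coe_eq_self]
          exact Nat.lt_succ_of_le (natDegree_mul_le.trans (by omega))
      _ = F := by
          rw [PowerSeries.trunc_mul_trunc, hPT,
            PowerSeries.trunc_coe_eq_self (Nat.lt_succ_of_le hF)]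

lemma exists_natDegree_le_mul_eq_iff_dvd [IsDomain R] {P F : R[X]} {d k : ℕ} (hF0 : F ≠ 0)
    (hP : P.natDegree ≤ k) (hF : F.natDegree = d + k) :
    (∃ Q : R[X], Q.natDegree ≤ d ∧ P * Q = F) ↔ P ∣ F ∧ P.natDegree = k := by
  have hdeg {Q : R[X]} (h : P * Q = F) : P.natDegree + Q.natDegree = d + k := by
    subst h
    rw [← hF, natDegree_mul (left_ne_zero_of_mul hF0) (right_ne_zero_of_mul hF0)]
  constructor
  · rintro ⟨Q, hQ, h⟩
    exact ⟨⟨Q, h.symm⟩, by have := hdeg h; omega⟩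
  · rintro ⟨⟨Q, h⟩, hPk⟩
    exact ⟨Q, by have := hdeg h.symm; omega, h.symm⟩

end Cofactor

section Binomial

lemma natDegree_one_add_C_mul_X_pow {R : Type*} [Semiring R] {n : ℕ} {c : R} (hc : c ≠ 0) :
    (1 + C c * X ^ n : R[X]).natDegree = n := by
  rw [← C_1, natDegree_C_add, natDegree_C_mul_X_pow n c hc]

variable {K : Type*} [Field K]

lemma separable_one_add_C_mul_X_pow {n : ℕ} (hn : (n : K) ≠ 0) {c : K} (hc : c ≠ 0) :
    (1 + C c * X ^ n : K[X]).Separable := by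
  have hfactor : (1 + C c * X ^ n : K[X]) = C c * (X ^ n - C (-c⁻¹)) := by
    rw [mul_sub, ← C_mul, mul_neg, mul_inv_cancel₀ hc, C_neg, C_1]
    ring
  rw [hfactor]
  exact (separable_X_pow_sub_C _ hn (neg_ne_zero.2 (inv_ne_zero hc))).unit_mul
    (isUnit_C.2 hc.isUnit)

lemma eq_zero_of_coeff_X_mul_mul_sq_eq_zero {P Q W : K[X]} {S : K⟦X⟧} {d k : ℕ} {c : K}
    (hPS : (P : K⟦X⟧) * S = 1) (hPQ : P * Q = 1 + C c * X ^ (d + k))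
    (hsep : (P * Q).Separable) (hP : P.natDegree = k) (hQ : Q.natDegree ≤ d)
    (hW : W.degree < k)
    (hcoeff : ∀ i : Fin k, PowerSeries.coeff (d + 1 + i) (((X * W : K[X]) : K⟦X⟧) * S ^ 2) = 0) :
    W = 0 := by
  have hP0 : P ≠ 0 := left_ne_zero_of_mul hsep.ne_zero
  have hXW : (X * W).natDegree ≤ k := by
    rcases eq_or_ne W 0 with rfl | hW0
    · simp
    · rw [natDegree_X_mul hW0]
      exact (natDegree_lt_iff_degree_lt hW0).2 hW
  have hcoprimeX : IsCoprime P X := by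
    have hPS0 : P.coeff 0 * PowerSeries.constantCoeff S = 1 := by
      simpa using congrArg PowerSeries.constantCoeff hPS
    have hXP : ¬X ∣ P := by
      rw [X_dvd_iff]
      exact left_ne_zero_of_mul_eq_one hPS0
    exact (irreducible_X.coprime_iff_not_dvd.2 hXP).symm
  have hseries : S * ((X * W * Q : K[X]) : K⟦X⟧) = ((X * W : K[X]) : K⟦X⟧) * S ^ 2 +
      PowerSeries.X ^ (d + k + 1) * (PowerSeries.C c * (W : K⟦X⟧) * S ^ 2) := by
    have hPQ' := congrArg (fun f : K[X] => (f : K⟦X⟧)) hPQ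
    push_cast at hPQ' ⊢
    linear_combination PowerSeries.X * (W : K⟦X⟧) * S ^ 2 * hPQ' -
      PowerSeries.X * (W : K⟦X⟧) * (Q : K⟦X⟧) * S * hPS
  have hXWQ : (X * W * Q).natDegree ≤ d + k := natDegree_mul_le.trans (by omega)
  obtain ⟨Q', -, hQ'⟩ := (exists_natDegree_le_mul_eq_iff_coeff hPS hP.le hXWQ).2 fun i => by
      rw [hseries, map_add, hcoeff i, PowerSeries.coeff_X_pow_mul', if_neg (by omega), add_zero]
  have hdvd : P ∣ W :=
    hcoprimeX.dvd_of_dvd_mul_left (hsep.isCoprime.dvd_of_dvd_mul_right ⟨Q', hQ'.symm⟩)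
  refine eq_zero_of_dvd_of_degree_lt hdvd ?_
  rwa [degree_eq_natDegree hP0, hP]

end Binomial

section FactorCount

variable {K : Type*} [Field K]

lemma eq_of_roots_eq_of_coeff_zero_eq_one {G H : K[X]} (hG : G.Splits) (hH : H.Splits)
    (hroots : G.roots = H.roots) (hG0 : G.coeff 0 = 1) (hH0 : H.coeff 0 = 1) : G = H := by
  have hG_eq := hG.eq_prod_roots
  have hH_eq := hH.eq_prod_roots
  rw [hroots] at hG_eq
  set M := (H.roots.map fun a => X - C a).prod
  have hlead : G.leadingCoeff * M.coeff 0 = 1 := by rw [← coeff_C_mul, ← hG_eq, hG0]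
  have hlead' : H.leadingCoeff * M.coeff 0 = 1 := by rw [← coeff_C_mul, ← hH_eq, hH0]
  have hM0 : M.coeff 0 ≠ 0 := right_ne_zero_of_mul_eq_one hlead
  rw [hG_eq, hH_eq, mul_right_cancel₀ hM0 (hlead.trans hlead'.symm)]

lemma bijOn_roots_toFinset [DecidableEq K] {F : K[X]} (hsep : F.Separable) (hsplit : F.Splits)
    (hF0 : F.coeff 0 ≠ 0) (k : ℕ) :
    Set.BijOn (fun G : K[X] => G.roots.toFinset)
      {G | G ∣ F ∧ G.natDegree = k ∧ G.coeff 0 = 1} (F.roots.toFinset.powersetCard k) := by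
  have hnodup {G : K[X]} (hG : G ∣ F) : G.roots.toFinset.val = G.roots :=
    Multiset.dedup_eq_self.2 (nodup_roots (hsep.of_dvd hG))
  have hsplits {G : K[X]} (hG : G ∣ F) : G.Splits := hsplit.of_dvd hsep.ne_zero hG
  refine ⟨?mapsTo, ?injOn, ?surjOn⟩
  case mapsTo =>
    rintro G ⟨hG, rfl, -⟩
    rw [Finset.mem_coe, Finset.mem_powersetCard, Finset.card_def, hnodup hG,
      (hsplits hG).natDegree_eq_card_roots]
    exact ⟨Multiset.toFinset_subset.2 (Multiset.subset_of_le (roots.le_of_dvd hsep.ne_zero hG)),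
      rfl⟩
  case injOn =>
    rintro G ⟨hG, -, hG0⟩ H ⟨hH, -, hH0⟩ hGH
    refine eq_of_roots_eq_of_coeff_zero_eq_one (hsplits hG) (hsplits hH) ?_ hG0 hH0
    rw [← hnodup hG, ← hnodup hH]
    exact congrArg Finset.val hGH
  case surjOn =>
    intro T hT
    obtain ⟨hTF, hTk⟩ := Finset.mem_powersetCard.1 (Finset.mem_coe.1 hT)
    set M : K[X] := ∏ a ∈ T, (X - C a) with hM
    have hMF : M ∣ F := (Multiset.prod_X_sub_C_dvd_iff_le_roots hsep.ne_zero T.val).2 <|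
      (Multiset.le_iff_subset T.nodup).2 fun a ha => Multiset.mem_toFinset.1 (hTF ha)
    have hM0 : M.coeff 0 ≠ 0 := by
      obtain ⟨N, rfl⟩ := hMF
      exact left_ne_zero_of_mul (mul_coeff_zero M N ▸ hF0)
    refine ⟨C (M.coeff 0)⁻¹ * M, ⟨?_, ?_, ?_⟩, ?_⟩
    · exact (isUnit_C.2 (inv_ne_zero hM0).isUnit).mul_left_dvd.2 hMF
    · rw [natDegree_C_mul (inv_ne_zero hM0), hM, natDegree_finsetProd_X_sub_C_eq_card, hTk]
    · rw [coeff_C_mul, inv_mul_cancel₀ hM0]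
    · change (C (M.coeff 0)⁻¹ * M).roots.toFinset = T
      rw [roots_C_mul _ (inv_ne_zero hM0), hM, roots_prod_X_sub_C, Finset.val_toFinset]

end FactorCount

section ChernPoly

variable {R : Type*} [Semiring R] [DecidableEq R] {k : ℕ}

/-- The total Chern class `1 + x₁ t + ⋯ + x_k tᵏ` of a bundle with Chern classes `x`, as a
polynomial in `t`. The entries of `x` are indexed from `0`, so `x i` is the coefficient of
`t ^ (i + 1)`. -/
noncomputable def chernPoly (x : Fin k → R) : R[X] := 1 + X * ofFn k x

lemma coeff_zero_chernPoly (x : Fin k → R) : (chernPoly x).coeff 0 = 1 := by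
  simp [chernPoly]

lemma coeff_succ_chernPoly (x : Fin k → R) (m : ℕ) :
    (chernPoly x).coeff (m + 1) = (ofFn k x).coeff m := by
  simp [chernPoly, coeff_one]

lemma natDegree_chernPoly_le (x : Fin k → R) : (chernPoly x).natDegree ≤ k := by
  rw [natDegree_le_iff_coeff_eq_zero]
  rintro (_ | m) hm
  · omega
  · rw [coeff_succ_chernPoly, ofFn_coeff_eq_zero_of_ge x (by omega)]

lemma map_chernPoly {R' : Type*} [Semiring R'] [DecidableEq R'] (f : R →+* R') (x : Fin k → R) :
    (chernPoly x).map f = chernPoly (f ∘ x) := by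
  simp [chernPoly, ofFn_eq_sum_monomial, Polynomial.map_sum]

lemma chernPoly_injective : Function.Injective (chernPoly : (Fin k → R) → R[X]) := by
  intro x y hxy
  ext i
  simpa [coeff_succ_chernPoly] using congrArg (coeff · (i + 1)) hxy

lemma exists_chernPoly_eq {G : R[X]} (hG : G.natDegree ≤ k) (hG0 : G.coeff 0 = 1) :
    ∃ x : Fin k → R, chernPoly x = G := by
  refine ⟨fun i => G.coeff (i + 1), ?_⟩
  ext (_ | m)
  · rw [coeff_zero_chernPoly, hG0]
  · rw [coeff_succ_chernPoly]
    rcases lt_or_ge m k with hm | hm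
    · rw [ofFn_coeff_eq_val_of_lt _ hm]
    · rw [ofFn_coeff_eq_zero_of_ge _ hm, coeff_eq_zero_of_natDegree_lt (by omega)]

end ChernPoly

section SegreSeries

lemma mk_derivation_coeff_mul {R A : Type*} [CommSemiring R] [CommSemiring A] [Algebra R A]
    (D : Derivation R A A) (f g : A⟦X⟧) :
    PowerSeries.mk (fun m => D (PowerSeries.coeff m (f * g))) =
      f * PowerSeries.mk (fun m => D (PowerSeries.coeff m g)) +
        g * PowerSeries.mk (fun m => D (PowerSeries.coeff m f)) := by
  ext m
  rw [mul_comm g]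
  simp only [PowerSeries.coeff_mk, PowerSeries.coeff_mul, map_add, map_sum, D.leibniz, smul_eq_mul,
    Finset.sum_add_distrib, mul_comm (PowerSeries.coeff _ g)]

variable (k : ℕ)

/-- The total Segre class `∑ Y_j t ^ j`, as a power series in `t` over `ℂ[X₁,…,X_k]`. -/
noncomputable def segreSeries : (MvPolynomial (Fin k) ℂ)⟦X⟧ := PowerSeries.mk (segreY k)

lemma segreY_succ_eq_neg_coeff (j : ℕ) :
    segreY k (j + 1) =
      -PowerSeries.coeff j (((ofFn k MvPolynomial.X : (MvPolynomial (Fin k) ℂ)[X]) :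
        (MvPolynomial (Fin k) ℂ)⟦X⟧) * segreSeries k) := by
  rw [segreY, PowerSeries.coeff_mul, Finset.Nat.sum_antidiagonal_eq_sum_range_succ_mk,
    ← Finset.sum_subset (Finset.range_mono (min_le_left (j + 1) k)), ← Fin.sum_univ_eq_sum_range]
  · refine congrArg Neg.neg (Finset.sum_congr rfl fun i _ => ?_)
    rw [coeff_coe, ofFn_coeff_eq_val_of_lt _ (by omega), segreSeries, PowerSeries.coeff_mk]
    rfl
  · intro i hij hik
    rw [Finset.mem_range] at hij hik
    rw [coeff_coe, ofFn_coeff_eq_zero_of_ge _ (by omega), zero_mul]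

lemma chernPoly_X_mul_segreSeries :
    ((chernPoly MvPolynomial.X : (MvPolynomial (Fin k) ℂ)[X]) : (MvPolynomial (Fin k) ℂ)⟦X⟧) *
      segreSeries k = 1 := by
  rw [chernPoly, coe_add, coe_mul, coe_one, coe_X, add_mul, one_mul, mul_assoc]
  ext (_ | j) : 1
  · simp [segreSeries, segreY]
  · rw [map_add, PowerSeries.coeff_succ_X_mul, segreSeries, PowerSeries.coeff_mk,
      segreY_succ_eq_neg_coeff, segreSeries, neg_add_cancel, PowerSeries.coeff_one,
      if_neg (by omega)]

lemma mk_pderiv_coeff_chernPoly_X (l : Fin k) :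
    PowerSeries.mk (fun m => MvPolynomial.pderiv l
      ((chernPoly MvPolynomial.X : (MvPolynomial (Fin k) ℂ)[X]).coeff m)) =
      PowerSeries.X ^ (l + 1 : ℕ) := by
  ext (_ | m) : 1
  · simp [coeff_zero_chernPoly, PowerSeries.coeff_X_pow]
  · rw [PowerSeries.coeff_mk, coeff_succ_chernPoly, PowerSeries.coeff_X_pow]
    rcases lt_or_ge m k with hm | hm
    · rw [ofFn_coeff_eq_val_of_lt _ hm, MvPolynomial.pderiv_X]
      simp [Pi.single_apply, Fin.ext_iff, eq_comm]
    · rw [ofFn_coeff_eq_zero_of_ge _ hm, map_zero, if_neg (by omega)]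

lemma mk_pderiv_segreY (l : Fin k) :
    PowerSeries.mk (fun m => MvPolynomial.pderiv l (segreY k m)) =
      -(PowerSeries.X ^ (l + 1 : ℕ) * segreSeries k ^ 2) := by
  have hinv := chernPoly_X_mul_segreSeries k
  have hleibniz := mk_derivation_coeff_mul (MvPolynomial.pderiv l)
    ((chernPoly MvPolynomial.X : (MvPolynomial (Fin k) ℂ)[X]) : (MvPolynomial (Fin k) ℂ)⟦X⟧)
    (segreSeries k)
  have hone : PowerSeries.mk (fun m => MvPolynomial.pderiv l
      (PowerSeries.coeff m (1 : (MvPolynomial (Fin k) ℂ)⟦X⟧))) = 0 := by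
    ext m : 1
    rw [PowerSeries.coeff_mk, PowerSeries.coeff_one]
    split_ifs <;> simp
  simp only [hinv, hone, coeff_coe, mk_pderiv_coeff_chernPoly_X] at hleibniz
  simp only [segreSeries, PowerSeries.coeff_mk] at hinv hleibniz ⊢
  linear_combination (-PowerSeries.mk (segreY k)) * hleibniz -
    PowerSeries.mk (fun m => MvPolynomial.pderiv l (segreY k m)) * hinv

variable {k}

lemma chernPoly_mul_map_segreSeries (x : Fin k → ℂ) :
    (chernPoly x : ℂ⟦X⟧) * (segreSeries k).map (MvPolynomial.eval x) = 1 := by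
  have hmap : (chernPoly MvPolynomial.X).map (MvPolynomial.eval x) = chernPoly x := by
    rw [map_chernPoly]
    congr 1
    ext i
    exact MvPolynomial.eval_X i
  rw [← hmap, polynomial_map_coe, ← map_mul, chernPoly_X_mul_segreSeries, map_one]

end SegreSeries

section QuantumRelation

variable {k n : ℕ}

lemma quantumRelation_eq (hkn : k ≤ n) (c : ℂ) (i : Fin k) :
    quantumRelation k n c i =
      segreY k (n - k + 1 + i) + MvPolynomial.C (if n - k + 1 + i = n then c else 0) := by
  rw [quantumRelation]
  split_ifs with hi hn hn
  · omega
  · rw [map_zero, add_zero]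
  · rw [hn]
  · omega

lemma eval_quantumRelation (hkn : k ≤ n) (c : ℂ) (x : Fin k → ℂ) (i : Fin k) :
    MvPolynomial.eval x (quantumRelation k n c i) =
      PowerSeries.coeff (n - k + 1 + i)
        ((segreSeries k).map (MvPolynomial.eval x) * ((1 + C c * X ^ n : ℂ[X]) : ℂ⟦X⟧)) := by
  have hle : n ≤ n - k + 1 + i ↔ n - k + 1 + i = n := by omega
  rw [quantumRelation_eq hkn, coe_add, coe_mul, coe_one, coe_C, coe_pow, coe_X, mul_add, mul_one,
    ← mul_assoc, map_add, map_add, PowerSeries.coeff_mul_X_pow']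
  simp only [hle, PowerSeries.coeff_map, segreSeries, PowerSeries.coeff_mk, MvPolynomial.eval_C]
  split_ifs with hn
  · simp [hn, segreY]
  · rfl

lemma forall_eval_quantumRelation_eq_zero_iff (hkn : k ≤ n) {c : ℂ} (hc : c ≠ 0) (hn : n ≠ 0)
    (x : Fin k → ℂ) :
    (∀ i, MvPolynomial.eval x (quantumRelation k n c i) = 0) ↔
      chernPoly x ∣ 1 + C c * X ^ n ∧ (chernPoly x).natDegree = k := by
  have hdeg : (1 + C c * X ^ n : ℂ[X]).natDegree = n - k + k := by
    rw [natDegree_one_add_C_mul_X_pow hc, Nat.sub_add_cancel hkn]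
  have hne : (1 + C c * X ^ n : ℂ[X]) ≠ 0 :=
    (separable_one_add_C_mul_X_pow (Nat.cast_ne_zero.2 hn) hc).ne_zero
  rw [← exists_natDegree_le_mul_eq_iff_dvd hne (natDegree_chernPoly_le x) hdeg,
    exists_natDegree_le_mul_eq_iff_coeff (chernPoly_mul_map_segreSeries x)
      (natDegree_chernPoly_le x) hdeg.le]
  simp only [eval_quantumRelation hkn]

lemma bijOn_chernPoly_quantumRelation (hkn : k ≤ n) {c : ℂ} (hc : c ≠ 0) (hn : n ≠ 0) :
    Set.BijOn chernPoly
      {x : Fin k → ℂ | ∀ i, MvPolynomial.eval x (quantumRelation k n c i) = 0}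
      {G | G ∣ 1 + C c * X ^ n ∧ G.natDegree = k ∧ G.coeff 0 = 1} := by
  simp only [forall_eval_quantumRelation_eq_zero_iff hkn hc hn]
  refine ⟨?mapsTo, chernPoly_injective.injOn, ?surjOn⟩
  case mapsTo =>
    rintro x ⟨hdvd, hdeg⟩
    exact ⟨hdvd, hdeg, coeff_zero_chernPoly x⟩
  case surjOn =>
    rintro G ⟨hdvd, hdeg, hG0⟩
    obtain ⟨x, rfl⟩ := exists_chernPoly_eq hdeg.le hG0
    exact ⟨x, ⟨hdvd, hdeg⟩, rfl⟩

lemma sum_eval_pderiv_quantumRelation_mul (hkn : k ≤ n) (c : ℂ) (x v : Fin k → ℂ) (i : Fin k) :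
    ∑ l, MvPolynomial.eval x (MvPolynomial.pderiv l (quantumRelation k n c i)) * v l =
      -PowerSeries.coeff (n - k + 1 + i)
        (((X * ofFn k v : ℂ[X]) : ℂ⟦X⟧) * (segreSeries k).map (MvPolynomial.eval x) ^ 2) := by
  have hcoe : ((X * ofFn k v : ℂ[X]) : ℂ⟦X⟧) =
      ∑ l, PowerSeries.C (v l) * PowerSeries.X ^ (l + 1 : ℕ) := by
    rw [ofFn_eq_sum_monomial, Finset.mul_sum, ← coeToPowerSeries.ringHom_apply, map_sum]
    refine Finset.sum_congr rfl fun l _ => ?_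
    rw [← C_mul_X_pow_eq_monomial]
    simp only [coeToPowerSeries.ringHom_apply, coe_mul, coe_X, coe_C, coe_pow]
    ring
  have hpderiv (l : Fin k) (m : ℕ) : MvPolynomial.eval x (MvPolynomial.pderiv l (segreY k m)) =
      -PowerSeries.coeff m
        (PowerSeries.X ^ (l + 1 : ℕ) * (segreSeries k).map (MvPolynomial.eval x) ^ 2) := by
    have h := congrArg (fun f => PowerSeries.coeff m (f.map (MvPolynomial.eval x)))
      (mk_pderiv_segreY k l)
    simpa using h
  rw [hcoe, Finset.sum_mul, map_sum, ← Finset.sum_neg_distrib]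
  refine Finset.sum_congr rfl fun l _ => ?_
  rw [quantumRelation_eq hkn, map_add, MvPolynomial.pderiv_C, add_zero, hpderiv, mul_assoc,
    PowerSeries.coeff_C_mul]
  ring

lemma det_eval_pderiv_quantumRelation_ne_zero (hkn : k ≤ n) {c : ℂ} (hc : c ≠ 0) (hn : n ≠ 0)
    {x : Fin k → ℂ} (hx : ∀ i, MvPolynomial.eval x (quantumRelation k n c i) = 0) :
    (Matrix.of fun i j : Fin k =>
      MvPolynomial.eval x (MvPolynomial.pderiv j (quantumRelation k n c i))).det ≠ 0 := by
  intro hdet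
  obtain ⟨v, hv0, hv⟩ := Matrix.exists_mulVec_eq_zero_iff.2 hdet
  obtain ⟨hdvd, hPk⟩ := (forall_eval_quantumRelation_eq_zero_iff hkn hc hn x).1 hx
  have hsep : (1 + C c * X ^ n : ℂ[X]).Separable :=
    separable_one_add_C_mul_X_pow (Nat.cast_ne_zero.2 hn) hc
  obtain ⟨Q, hQ, hPQ⟩ := (exists_natDegree_le_mul_eq_iff_dvd (d := n - k) hsep.ne_zero hPk.le
    (by rw [natDegree_one_add_C_mul_X_pow hc, Nat.sub_add_cancel hkn])).2 ⟨hdvd, hPk⟩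
  have hcoeff (i : Fin k) : PowerSeries.coeff (n - k + 1 + i)
      (((X * ofFn k v : ℂ[X]) : ℂ⟦X⟧) * (segreSeries k).map (MvPolynomial.eval x) ^ 2) = 0 := by
    rw [← neg_eq_zero, ← sum_eval_pderiv_quantumRelation_mul hkn c]
    exact congrFun hv i
  have hW : ofFn k v = 0 :=
    eq_zero_of_coeff_X_mul_mul_sq_eq_zero (chernPoly_mul_map_segreSeries x)
      (by rw [hPQ, Nat.sub_add_cancel hkn]) (hPQ ▸ hsep) hPk hQ (ofFn_degree_lt v) hcoeff
  exact hv0 (injective_ofFn k (hW.trans (ofFn_zero k).symm))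

end QuantumRelation

/-- For `1 ≤ k ≤ n` and `c ≠ 0`, the system
`Y_{n-k+1} = 0, …, Y_{n-1} = 0, Yₙ + c = 0` has exactly `binomial(n,k)` solutions in `ℂᵏ`,
and at every solution the Jacobian determinant of `(Y_{n-k+1}, …, Y_{n-1}, Yₙ + c)` is
nonzero. -/
theorem quantum_grassmannian_relations_solutions
    (n k : ℕ) (hk : 1 ≤ k) (hkn : k ≤ n) (c : ℂ) (hc : c ≠ 0) :
    {x : Fin k → ℂ | ∀ i, MvPolynomial.eval x (quantumRelation k n c i) = 0}.Finite ∧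
    {x : Fin k → ℂ | ∀ i, MvPolynomial.eval x (quantumRelation k n c i) = 0}.ncard =
      Nat.choose n k ∧
    ∀ x : Fin k → ℂ, (∀ i, MvPolynomial.eval x (quantumRelation k n c i) = 0) →
      MvPolynomial.eval x
        (Matrix.det (Matrix.of fun i j : Fin k =>
          MvPolynomial.pderiv j (quantumRelation k n c i))) ≠ 0 := by
  have hn : n ≠ 0 := by omega
  have hsep : (1 + C c * X ^ n : ℂ[X]).Separable :=
    separable_one_add_C_mul_X_pow (Nat.cast_ne_zero.2 hn) hc
  have hsplit := IsAlgClosed.splits (1 + C c * X ^ n : ℂ[X])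
  have hF0 : (1 + C c * X ^ n : ℂ[X]).coeff 0 ≠ 0 := by simp [coeff_X_pow, hn.symm]
  have hbij := (bijOn_roots_toFinset hsep hsplit hF0 k).comp
    (bijOn_chernPoly_quantumRelation hkn hc hn)
  refine ⟨hbij.finite_iff_finite.2 (Finset.finite_toSet _), ?_, fun x hx => ?_⟩
  · rw [hbij.ncard_eq, Set.ncard_coe_finset, Finset.card_powersetCard,
      Multiset.toFinset_card_of_nodup (nodup_roots hsep), ← hsplit.natDegree_eq_card_roots,
      natDegree_one_add_C_mul_X_pow hc]
  · rw [RingHom.map_det]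
    exact det_eval_pderiv_quantumRelation_ne_zero hkn hc hn hx
end

section
/- Let 1 ≤ k ≤ n and let c ∈ ℂ with c ≠ 0. Then the quotient ring ℂ[X₁,…,X_k]/(Y_{n−k+1}, …, Y_{n−1}, Yₙ + c) has dimension binomial(n, k) as a ℂ-vector space. -/
/-!
Sending `Xᵢ` to the coefficient of `t ^ (k - i)` identifies the homomorphisms `ℂ[X₁,…,X_k] → B`
with the monic polynomials `P` of degree `k` over `B`, and turns the `Y_j` into the coefficients of
the power series inverse to `t ^ k * P(1/t)`. The quantum relations then say exactly that `P`
divides `t ^ n + c`: the quotient ring carries the universal monic divisor of degree `k` of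
`t ^ n + c`.

In general, let `A` carry the universal monic divisor `P` of degree `k` of a monic polynomial `F`
of degree `n` over a finite-dimensional algebra `R`. Adjoining a root `a` of `P` to `A` yields the
universal divisor of degree `k - 1` of `F / (t - a)` over `R[t]/(F)`, where `a` is the class of `t`.
By induction on `k`, `k * dim A = binomial(n - 1, k - 1) * (n * dim R)`, that is,
`dim A = binomial(n, k) * dim R`.
-/

open Polynomial
open scoped PowerSeries

section MonicDegreeEq

variable {R S T : Type*} [CommRing R] [CommRing S] [CommRing T] {k m n : ℕ}

lemma monicDegreeEq_map_comp (P : MonicDegreeEq R k) (f : R →+* S) (g : S →+* T) :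
    P.map (g.comp f) = (P.map f).map g :=
  Subtype.ext (Polynomial.map_map f g P.1).symm

lemma natDegree_monicDegreeEq_le (P : MonicDegreeEq R k) : P.1.natDegree ≤ k :=
  natDegree_le_iff_coeff_eq_zero.mpr fun _ => P.2.2 _

lemma natDegree_reflect_monicDegreeEq_le (P : MonicDegreeEq R k) :
    (P.1.reflect k).natDegree ≤ k :=
  natDegree_reflect_le.trans (max_le le_rfl (natDegree_monicDegreeEq_le P))

lemma coeff_zero_reflect_monicDegreeEq (P : MonicDegreeEq R k) : (P.1.reflect k).coeff 0 = 1 := by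
  rw [coeff_reflect, revAt_zero, P.2.1]

instance subsingleton_monicDegreeEq_zero : Subsingleton (MonicDegreeEq R 0) where
  allEq P Q := Subtype.ext (by
    nontriviality R
    rw [eq_one_of_monic_natDegree_zero P.monic P.natDegree,
      eq_one_of_monic_natDegree_zero Q.monic Q.natDegree])

lemma exists_monicDegreeEq_mul_eq_of_dvd {P : MonicDegreeEq R k} {F : MonicDegreeEq R n}
    (hn : k + m = n) (h : P.1 ∣ F.1) : ∃ Q : MonicDegreeEq R m, P.1 * Q.1 = F.1 := by
  cases subsingleton_or_nontrivial R
  · exact ⟨⟨X ^ m, Subsingleton.elim _ _, fun _ _ => Subsingleton.elim _ _⟩, Subsingleton.elim _ _⟩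
  obtain ⟨Q, hQ⟩ := h
  have hmonic : Q.Monic := P.monic.of_mul_monic_left (hQ ▸ F.monic)
  have hdeg : k + Q.natDegree = n := by
    rw [← P.natDegree, ← P.monic.natDegree_mul hmonic, ← hQ, F.natDegree]
  exact ⟨.mk Q hmonic (by omega), hQ.symm⟩

/-- The monic polynomial `(X - a) * Q` of degree one more than `Q`, that is, `Q` with `a` added to
its roots. -/
noncomputable def consRoot (a : R) (Q : MonicDegreeEq R k) : MonicDegreeEq R (k + 1) :=
  ⟨(X - C a) * Q.1, by
    nontriviality R
    have hdeg : ((X - C a) * Q.1).natDegree = k + 1 := by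
      rw [(monic_X_sub_C a).natDegree_mul Q.monic, natDegree_X_sub_C, Q.natDegree, add_comm]
    exact (MonicDegreeEq.mk _ ((monic_X_sub_C a).mul Q.monic) hdeg).2⟩

lemma map_consRoot (f : R →+* S) (a : R) (Q : MonicDegreeEq R k) :
    (consRoot a Q).map f = consRoot (f a) (Q.map f) :=
  Subtype.ext (by simp [consRoot])

lemma consRoot_injective (a : R) :
    Function.Injective (consRoot a : MonicDegreeEq R k → MonicDegreeEq R (k + 1)) :=
  fun _ _ h => Subtype.ext ((monic_X_sub_C a).isRegular.left (congrArg Subtype.val h))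

lemma consRoot_dvd_consRoot_iff {a : R} {Q : MonicDegreeEq R k} {G : MonicDegreeEq R m} :
    (consRoot a Q).1 ∣ (consRoot a G).1 ↔ Q.1 ∣ G.1 :=
  (monic_X_sub_C a).isRegular.left.dvd_cancel_left

lemma isRoot_consRoot (a : R) (Q : MonicDegreeEq R k) : (consRoot a Q).1.IsRoot a :=
  dvd_iff_isRoot.mp (dvd_mul_right _ _)

lemma exists_consRoot_eq_of_isRoot {F : MonicDegreeEq R (k + 1)} {a : R} (h : F.1.IsRoot a) :
    ∃ G : MonicDegreeEq R k, consRoot a G = F := by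
  nontriviality R
  obtain ⟨G, hG⟩ := exists_monicDegreeEq_mul_eq_of_dvd (add_comm 1 k)
    (P := .mk (X - C a) (monic_X_sub_C a) (natDegree_X_sub_C a)) (dvd_iff_isRoot.mpr h)
  exact ⟨G, Subtype.ext hG⟩

end MonicDegreeEq

section AdjoinRoot

variable {K R A : Type*} [CommRing K] [CommRing R] [CommRing A] [Algebra K R] [Algebra K A]
  {k n : ℕ}

lemma mapAlgHom_root {p : R[X]} {q : A[X]} {φ : R →ₐ[K] A} (h : q ∣ p.map (φ : R →+* A)) :
    AdjoinRoot.mapAlgHom φ p q h (.root p) = .root q :=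
  AdjoinRoot.map_root _ _ _ h

lemma mapAlgHom_comp_ofAlgHom {p : R[X]} {q : A[X]} {φ : R →ₐ[K] A}
    (h : q ∣ p.map (φ : R →+* A)) :
    (AdjoinRoot.mapAlgHom φ p q h).comp (AdjoinRoot.ofAlgHom K p) =
      (AdjoinRoot.ofAlgHom K q).comp φ :=
  AlgHom.ext fun r => AdjoinRoot.map_of _ _ _ h r

lemma exists_consRoot_root_eq_map_of (F : MonicDegreeEq R (n + 1)) :
    ∃ G : MonicDegreeEq (AdjoinRoot F.1) n,
      consRoot (.root F.1) G = F.map (AdjoinRoot.of F.1) :=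
  exists_consRoot_eq_of_isRoot (AdjoinRoot.isRoot_root F.1)

lemma map_comp_ofAlgHom_eq_consRoot {F : MonicDegreeEq R (n + 1)}
    {G : MonicDegreeEq (AdjoinRoot F.1) n}
    (hG : consRoot (.root F.1) G = F.map (AdjoinRoot.of F.1)) (ψ : AdjoinRoot F.1 →ₐ[K] A) :
    F.map (ψ.comp (AdjoinRoot.ofAlgHom K F.1) : R →+* A) =
      consRoot (ψ (.root F.1)) (G.map (ψ : AdjoinRoot F.1 →+* A)) := by
  have hmap := map_consRoot (ψ : AdjoinRoot F.1 →+* A) (.root F.1) G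
  rwa [hG, ← monicDegreeEq_map_comp] at hmap

lemma adjoinRoot_of_injective (P : MonicDegreeEq A (k + 1)) :
    Function.Injective (AdjoinRoot.of P.1) := by
  nontriviality A
  refine (injective_iff_map_eq_zero _).mpr fun a ha => by_contra fun hne => ?_
  refine AdjoinRoot.mk_ne_zero_of_natDegree_lt P.monic (C_ne_zero.mpr hne) ?_ ha
  rw [natDegree_C, P.natDegree]
  exact k.succ_pos

lemma finrank_adjoinRoot_monicDegreeEq (K : Type*) [Field K] [Algebra K R]
    (F : MonicDegreeEq R n) : Module.finrank K (AdjoinRoot F.1) = n * Module.finrank K R := by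
  cases subsingleton_or_nontrivial R
  · have : Subsingleton (AdjoinRoot F.1) := AdjoinRoot.mk_surjective.subsingleton
    simp [Module.finrank_zero_of_subsingleton]
  have := F.monic.free_adjoinRoot
  have hrank : Module.finrank R (AdjoinRoot F.1) = n := by
    rw [(AdjoinRoot.powerBasis' F.monic).finrank, AdjoinRoot.powerBasis'_dim, F.natDegree]
  rw [← Module.finrank_mul_finrank K R, hrank, mul_comm]

end AdjoinRoot

section UniversalDivisor

universe u

/-- `φ : R →ₐ[K] A` carries the universal monic divisor `P` of degree `k` of `F`: among the
`K`-algebras `B` with a homomorphism `ψ : R → B` and a monic divisor of degree `k` of the image of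
`F` in `B[X]`, the triple `(A, φ, P)` is initial. The test algebras `B` live in the universe of `R`
and `A`. -/
structure IsUniversalDivisor {K : Type*} [CommRing K] {R A : Type u} [CommRing R] [CommRing A]
    [Algebra K R] [Algebra K A] {n k : ℕ} (φ : R →ₐ[K] A) (F : MonicDegreeEq R n)
    (P : MonicDegreeEq A k) : Prop where
  dvd : P.1 ∣ F.1.map (φ : R →+* A)
  exists_lift {B : Type u} [CommRing B] [Algebra K B] (ψ : R →ₐ[K] B) (Q : MonicDegreeEq B k) :
    Q.1 ∣ F.1.map (ψ : R →+* B) → ∃ θ : A →ₐ[K] B, θ.comp φ = ψ ∧ P.map (θ : A →+* B) = Q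
  hom_ext {B : Type u} [CommRing B] [Algebra K B] {θ₁ θ₂ : A →ₐ[K] B} :
    θ₁.comp φ = θ₂.comp φ → P.map (θ₁ : A →+* B) = P.map (θ₂ : A →+* B) → θ₁ = θ₂

namespace IsUniversalDivisor

section CommRing

variable {K : Type*} [CommRing K] {R A B : Type u} [CommRing R] [CommRing A] [CommRing B]
  [Algebra K R] [Algebra K A] [Algebra K B] {n k : ℕ} {φ : R →ₐ[K] A}

lemma bijective_of_degree_zero {F : MonicDegreeEq R n} {P : MonicDegreeEq A 0}
    (h : IsUniversalDivisor φ F P) : Function.Bijective φ := by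
  obtain ⟨θ, hθφ, -⟩ := h.exists_lift (AlgHom.id K R) (.mk 1 monic_one natDegree_one) (one_dvd _)
  have hφθ : φ.comp θ = AlgHom.id K A :=
    h.hom_ext (by rw [AlgHom.comp_assoc, hθφ, AlgHom.comp_id, AlgHom.id_comp])
      (Subsingleton.elim _ _)
  exact (AlgEquiv.ofAlgHom φ θ hφθ hθφ).bijective

lemma subsingleton_of_lt {F : MonicDegreeEq R n} {P : MonicDegreeEq A k}
    (h : IsUniversalDivisor φ F P) (hnk : n < k) : Subsingleton A := by
  refine not_nontrivial_iff_subsingleton.mp fun _ => ?_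
  refine P.monic.not_dvd_of_natDegree_lt (F.map (φ : R →+* A)).monic.ne_zero ?_ h.dvd
  rwa [MonicDegreeEq.natDegree, P.natDegree]

variable {F : MonicDegreeEq R (n + 1)} {P : MonicDegreeEq A (k + 1)}
  {G : MonicDegreeEq (AdjoinRoot F.1) n} {Q : MonicDegreeEq (AdjoinRoot P.1) k}

lemma adjoinRoot_dvd (h : IsUniversalDivisor φ F P)
    (hG : consRoot (.root F.1) G = F.map (AdjoinRoot.of F.1))
    (hQ : consRoot (.root P.1) Q = P.map (AdjoinRoot.of P.1)) :
    Q.1 ∣ (G.map (AdjoinRoot.mapAlgHom φ F.1 P.1 h.dvd : AdjoinRoot F.1 →+* AdjoinRoot P.1)).1 := by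
  rw [← consRoot_dvd_consRoot_iff (a := .root P.1), hQ, ← mapAlgHom_root h.dvd,
    ← map_comp_ofAlgHom_eq_consRoot hG, mapAlgHom_comp_ofAlgHom]
  have hdvd := map_dvd (AdjoinRoot.of P.1) h.dvd
  rwa [Polynomial.map_map] at hdvd

lemma adjoinRoot_exists_lift (h : IsUniversalDivisor φ F P)
    (hG : consRoot (.root F.1) G = F.map (AdjoinRoot.of F.1))
    (hQ : consRoot (.root P.1) Q = P.map (AdjoinRoot.of P.1))
    (ψ : AdjoinRoot F.1 →ₐ[K] B) (Q' : MonicDegreeEq B k)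
    (hQ' : Q'.1 ∣ (G.map (ψ : AdjoinRoot F.1 →+* B)).1) :
    ∃ θ : AdjoinRoot P.1 →ₐ[K] B, θ.comp (AdjoinRoot.mapAlgHom φ F.1 P.1 h.dvd) = ψ ∧
      Q.map (θ : AdjoinRoot P.1 →+* B) = Q' := by
  obtain ⟨θ₀, hθ₀φ, hθ₀P⟩ := h.exists_lift (ψ.comp (AdjoinRoot.ofAlgHom K F.1))
    (consRoot (ψ (.root F.1)) Q')
    (by rwa [← MonicDegreeEq.map_coe, map_comp_ofAlgHom_eq_consRoot hG, consRoot_dvd_consRoot_iff])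
  have hroot : P.1.eval₂ (θ₀ : A →+* B) (ψ (.root F.1)) = 0 := by
    rw [eval₂_eq_eval_map, ← MonicDegreeEq.map_coe, hθ₀P]
    exact isRoot_consRoot _ _
  let θ := AdjoinRoot.liftAlgHom P.1 θ₀ (ψ (.root F.1)) hroot
  have hθ_of : θ.comp (AdjoinRoot.ofAlgHom K P.1) = θ₀ :=
    AlgHom.ext fun a => AdjoinRoot.liftAlgHom_of _ _ _ hroot a
  have hθ_root : θ (.root P.1) = ψ (.root F.1) := AdjoinRoot.liftAlgHom_root ..
  refine ⟨θ, AdjoinRoot.algHom_ext' ?_ ?_, consRoot_injective (ψ (.root F.1)) ?_⟩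
  · rw [AlgHom.comp_assoc, mapAlgHom_comp_ofAlgHom, ← AlgHom.comp_assoc, hθ_of, hθ₀φ]
  · rw [AlgHom.comp_apply, mapAlgHom_root, hθ_root]
  · rw [← hθ_root, ← map_comp_ofAlgHom_eq_consRoot hQ, hθ_of, hθ₀P, hθ_root]

lemma adjoinRoot_hom_ext (h : IsUniversalDivisor φ F P)
    (hQ : consRoot (.root P.1) Q = P.map (AdjoinRoot.of P.1)) {θ₁ θ₂ : AdjoinRoot P.1 →ₐ[K] B}
    (hcomp : θ₁.comp (AdjoinRoot.mapAlgHom φ F.1 P.1 h.dvd) =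
      θ₂.comp (AdjoinRoot.mapAlgHom φ F.1 P.1 h.dvd))
    (hmap : Q.map (θ₁ : AdjoinRoot P.1 →+* B) = Q.map (θ₂ : AdjoinRoot P.1 →+* B)) :
    θ₁ = θ₂ := by
  have hroot : θ₁ (.root P.1) = θ₂ (.root P.1) := by
    rw [← mapAlgHom_root h.dvd]
    exact DFunLike.congr_fun hcomp _
  refine AdjoinRoot.algHom_ext' (h.hom_ext ?_ ?_) hroot
  · rw [AlgHom.comp_assoc, ← mapAlgHom_comp_ofAlgHom h.dvd, ← AlgHom.comp_assoc, hcomp,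
      AlgHom.comp_assoc, mapAlgHom_comp_ofAlgHom, AlgHom.comp_assoc]
  · rw [map_comp_ofAlgHom_eq_consRoot hQ, map_comp_ofAlgHom_eq_consRoot hQ, hroot, hmap]

lemma adjoinRoot (h : IsUniversalDivisor φ F P)
    (hG : consRoot (.root F.1) G = F.map (AdjoinRoot.of F.1))
    (hQ : consRoot (.root P.1) Q = P.map (AdjoinRoot.of P.1)) :
    IsUniversalDivisor (AdjoinRoot.mapAlgHom φ F.1 P.1 h.dvd) G Q where
  dvd := h.adjoinRoot_dvd hG hQ
  exists_lift := h.adjoinRoot_exists_lift hG hQ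
  hom_ext := h.adjoinRoot_hom_ext hQ

end CommRing

theorem finite_and_finrank_eq {K : Type*} [Field K] {R A : Type u} [CommRing R] [CommRing A]
    [Algebra K R] [Algebra K A] [Module.Finite K R] {n k : ℕ} {φ : R →ₐ[K] A}
    {F : MonicDegreeEq R n} {P : MonicDegreeEq A k} (h : IsUniversalDivisor φ F P) :
    Module.Finite K A ∧ Module.finrank K A = n.choose k * Module.finrank K R := by
  induction k generalizing n R A with
  | zero =>
    let e := LinearEquiv.ofBijective φ.toLinearMap h.bijective_of_degree_zero
    exact ⟨.equiv e, by rw [← e.finrank_eq, Nat.choose_zero_right, one_mul]⟩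
  | succ k ih =>
    obtain _ | n := n
    · have := h.subsingleton_of_lt k.succ_pos
      exact ⟨inferInstance, by simp [Module.finrank_zero_of_subsingleton]⟩
    obtain ⟨G, hG⟩ := exists_consRoot_root_eq_map_of F
    obtain ⟨Q, hQ⟩ := exists_consRoot_root_eq_map_of P
    have : Module.Finite R (AdjoinRoot F.1) := F.monic.finite_adjoinRoot
    have : Module.Finite K (AdjoinRoot F.1) := .trans R _
    obtain ⟨hfin, hrank⟩ := ih (h.adjoinRoot hG hQ)
    refine ⟨.of_injective (AdjoinRoot.ofAlgHom K P.1).toLinearMap (adjoinRoot_of_injective P), ?_⟩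
    rw [finrank_adjoinRoot_monicDegreeEq, finrank_adjoinRoot_monicDegreeEq] at hrank
    refine Nat.eq_of_mul_eq_mul_left (Nat.add_one_pos k) ?_
    linear_combination hrank + Module.finrank K R * Nat.add_one_mul_choose_eq n k

end IsUniversalDivisor

end UniversalDivisor

section PowerSeries

variable {R : Type*} [CommRing R] {k m : ℕ} {P : MonicDegreeEq R k} {F : MonicDegreeEq R (k + m)}
  {y : R⟦X⟧}

lemma coeff_reflect_mul_eq_zero_of_dvd (hy : (P.1.reflect k : R⟦X⟧) * y = 1)
    (h : P.1 ∣ F.1) {l : ℕ} (hl : m < l) :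
    PowerSeries.coeff l ((F.1.reflect (k + m) : R⟦X⟧) * y) = 0 := by
  obtain ⟨Q, hQ⟩ := exists_monicDegreeEq_mul_eq_of_dvd rfl h
  have hquot : (F.1.reflect (k + m) : R⟦X⟧) * y = Q.1.reflect m := by
    rw [← hQ, reflect_mul _ _ (natDegree_monicDegreeEq_le P) (natDegree_monicDegreeEq_le Q),
      coe_mul, mul_right_comm, hy, one_mul]
  rw [hquot, coeff_coe, coeff_reflect, revAt_eq_self_of_lt hl, Q.2.2 l hl]

lemma X_pow_dvd_sub_trunc {z : R⟦X⟧} {a b : ℕ}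
    (h : ∀ l, a ≤ l → l < b → PowerSeries.coeff l z = 0) :
    (PowerSeries.X : R⟦X⟧) ^ b ∣ z - (PowerSeries.trunc a z : R⟦X⟧) := by
  refine PowerSeries.X_pow_dvd_iff.mpr fun l hl => ?_
  rw [map_sub, coeff_coe, PowerSeries.coeff_trunc]
  split_ifs with hla
  · exact sub_self _
  · rw [h l (not_lt.mp hla) hl, sub_zero]

lemma dvd_of_coeff_reflect_mul_eq_zero (hy : (P.1.reflect k : R⟦X⟧) * y = 1)
    (h : ∀ l, m < l → l ≤ k + m →
      PowerSeries.coeff l ((F.1.reflect (k + m) : R⟦X⟧) * y) = 0) :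
    P.1 ∣ F.1 := by
  set z := (F.1.reflect (k + m) : R⟦X⟧) * y
  set t := PowerSeries.trunc (m + 1) z
  have ht : t.natDegree ≤ m := Nat.lt_succ_iff.mp (PowerSeries.natDegree_trunc_lt z m)
  have hPz : (P.1.reflect k : R⟦X⟧) * z = F.1.reflect (k + m) := by
    rw [mul_left_comm, hy, mul_one]
  have hPt : P.1.reflect k * t = F.1.reflect (k + m) := by
    refine (ext_iff_natDegree_le (natDegree_mul_le_of_le (natDegree_reflect_monicDegreeEq_le P) ht)
      (natDegree_reflect_monicDegreeEq_le F)).mpr fun l hl => ?_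
    have hdvd := (X_pow_dvd_sub_trunc fun l hl hlt => h l hl (Nat.lt_succ_iff.mp hlt)).mul_left
      (P.1.reflect k : R⟦X⟧)
    have hcoeff := PowerSeries.X_pow_dvd_iff.mp hdvd l (Nat.lt_succ_iff.mpr hl)
    rw [mul_sub, hPz, ← coe_mul, ← coe_sub, coeff_coe, coeff_sub] at hcoeff
    exact (sub_eq_zero.mp hcoeff).symm
  refine ⟨t.reflect m, ?_⟩
  rw [← reflect_reflect (N := k + m) (p := F.1), ← hPt,
    reflect_mul _ _ (natDegree_reflect_monicDegreeEq_le P) ht, reflect_reflect]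

end PowerSeries

section QuantumRing

variable {R S T : Type*} [CommRing R] [CommRing S] [CommRing T] [Algebra R S] [Algebra R T] {k : ℕ}

/-- The Chern polynomial `t ^ k + f(X₁) t ^ (k - 1) + … + f(X_k)` of a homomorphism `f` on
`R[X₁,…,X_k]`; every monic polynomial of degree `k` over `S` arises from exactly one `f`. Indices
run against degrees: the `i`-th variable gives the coefficient of `t ^ (k - 1 - i)`, whence the
reversal of the variables. -/
noncomputable def chernPolynomialEquiv (R S : Type*) [CommRing R] [CommRing S] [Algebra R S]
    (k : ℕ) : (MvPolynomial (Fin k) R →ₐ[R] S) ≃ MonicDegreeEq S k :=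
  ((MvPolynomial.renameEquiv R Fin.revPerm).arrowCongr .refl).trans
    (MvPolynomial.mapEquivMonic R S k)

/-- The Chern class `X_(i+1)`, extended by zero to all `i`, so that the recursion for the Segre
classes becomes a convolution. -/
noncomputable def chernClass (R : Type*) [CommRing R] (k i : ℕ) : MvPolynomial (Fin k) R :=
  if h : i < k then .X ⟨i, h⟩ else 0

lemma chernPolynomialEquiv_comp (f : MvPolynomial (Fin k) R →ₐ[R] S) (g : S →ₐ[R] T) :
    chernPolynomialEquiv R T k (g.comp f) = (chernPolynomialEquiv R S k f).map (g : S →+* T) :=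
  MvPolynomial.coe_mapEquivMonic_comp' k
    (f.comp (MvPolynomial.renameEquiv R Fin.revPerm).symm.toAlgHom) g

lemma coeff_succ_reflect_chernPolynomialEquiv (f : MvPolynomial (Fin k) R →ₐ[R] S) (i : ℕ) :
    ((chernPolynomialEquiv R S k f).1.reflect k).coeff (i + 1) = f (chernClass R k i) := by
  rw [coeff_reflect, chernClass]
  split_ifs with h
  · have hlt : k - (i + 1) < k := by omega
    have hrev : Fin.rev ⟨k - (i + 1), hlt⟩ = ⟨i, h⟩ := Fin.ext (by simp only [Fin.val_rev]; omega)
    simp [revAt_le (Nat.succ_le_of_lt h), chernPolynomialEquiv, MvPolynomial.mapEquivMonic,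
      coeff_freeMonic, hlt, hrev]
  · rw [revAt_eq_self_of_lt (by omega), map_zero]
    exact (chernPolynomialEquiv R S k f).2.2 _ (by omega)

lemma segreY_succ (k j : ℕ) :
    segreY k (j + 1) =
      -∑ p ∈ Finset.HasAntidiagonal.antidiagonal j, chernClass ℂ k p.1 * segreY k p.2 := by
  have hvanish : ∀ i ∈ Finset.range (j + 1), i ∉ Finset.range (min (j + 1) k) →
      chernClass ℂ k i * segreY k (j - i) = 0 := fun i hi hik => by
    rw [Finset.mem_range] at hi hik
    rw [chernClass, dif_neg (by omega), zero_mul]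
  rw [segreY, Finset.Nat.sum_antidiagonal_eq_sum_range_succ (chernClass ℂ k · * segreY k ·),
    ← Finset.sum_subset (Finset.range_subset_range.mpr (min_le_left _ _)) hvanish,
    ← Fin.sum_univ_eq_sum_range (fun i => chernClass ℂ k i * segreY k (j - i))]
  refine congrArg _ (Finset.sum_congr rfl fun i _ => ?_)
  rw [chernClass, dif_pos (i.2.trans_le (min_le_right _ _))]
  rfl

lemma reflect_chernPolynomialEquiv_mul_segreY [Algebra ℂ S] (f : MvPolynomial (Fin k) ℂ →ₐ[ℂ] S) :
    ((chernPolynomialEquiv ℂ S k f).1.reflect k : S⟦X⟧) *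
      PowerSeries.mk (fun j => f (segreY k j)) = 1 := by
  ext j
  rw [PowerSeries.coeff_mul]
  cases j with
  | zero =>
    rw [Finset.Nat.antidiagonal_zero, Finset.sum_singleton, coeff_coe,
      coeff_zero_reflect_monicDegreeEq, PowerSeries.coeff_mk, segreY, map_one, one_mul,
      PowerSeries.coeff_zero_one]
  | succ j =>
    simp only [Finset.Nat.sum_antidiagonal_succ, coeff_coe, coeff_zero_reflect_monicDegreeEq,
      coeff_succ_reflect_chernPolynomialEquiv, PowerSeries.coeff_mk]
    rw [segreY_succ, map_neg, map_sum, one_mul]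
    simp [PowerSeries.coeff_one]

/-- The polynomial `t ^ n + c`, whose monic divisors of degree `k` are parametrized by the quantum
ring of `G(k,n)`. -/
noncomputable def quantumPolynomial {n : ℕ} (hn : 0 < n) (c : ℂ) : MonicDegreeEq ℂ n :=
  .mk (X ^ n + C c) (monic_X_pow_add_C c hn.ne') natDegree_X_pow_add_C

lemma map_quantumRelation [Algebra ℂ S] {m : ℕ} (h : 0 < k + m) (c : ℂ)
    (f : MvPolynomial (Fin k) ℂ →ₐ[ℂ] S) (i : Fin k) :
    f (quantumRelation k (k + m) c i) = PowerSeries.coeff (m + 1 + i)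
      (((((quantumPolynomial h c).map (algebraMap ℂ S)).1.reflect (k + m) : S[X]) : S⟦X⟧) *
        PowerSeries.mk (fun j => f (segreY k j))) := by
  have hrefl : (((quantumPolynomial h c).map (algebraMap ℂ S)).1.reflect (k + m)) =
      1 + C (algebraMap ℂ S c) * X ^ (k + m) := by
    simp [quantumPolynomial, reflect_add, reflect_C, reflect_monomial]
  simp only [hrefl, coe_add, coe_one, coe_mul, coe_C, coe_pow, coe_X, add_mul, one_mul, mul_assoc,
    map_add, PowerSeries.coeff_C_mul, PowerSeries.coeff_X_pow_mul', PowerSeries.coeff_mk]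
  rw [quantumRelation]
  split_ifs with hi hle hle
  · omega
  · simp
  · have hlast : m + 1 + i = k + m := by omega
    simp [hlast, segreY]
  · omega

lemma forall_map_quantumRelation_eq_zero_iff_dvd [Algebra ℂ S] {m : ℕ} (h : 0 < k + m) {c : ℂ}
    {f : MvPolynomial (Fin k) ℂ →ₐ[ℂ] S} :
    (∀ i, f (quantumRelation k (k + m) c i) = 0) ↔
      (chernPolynomialEquiv ℂ S k f).1 ∣ ((quantumPolynomial h c).map (algebraMap ℂ S)).1 := by
  have hinv := reflect_chernPolynomialEquiv_mul_segreY f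
  simp only [map_quantumRelation h]
  refine ⟨fun hcoeff => dvd_of_coeff_reflect_mul_eq_zero hinv fun l hml hlk => ?_,
    fun hdvd i => coeff_reflect_mul_eq_zero_of_dvd hinv hdvd (by omega)⟩
  obtain ⟨i, rfl⟩ := Nat.exists_eq_add_of_le (Nat.succ_le_of_lt hml)
  exact hcoeff ⟨i, by omega⟩

/-- The quantum cohomology ring of `G(k,n)` with quantum parameter `c`; at `c = 0` this is the
classical cohomology ring. -/
abbrev QuantumRing (k n : ℕ) (c : ℂ) : Type :=
  MvPolynomial (Fin k) ℂ ⧸ Ideal.span (Set.range (quantumRelation k n c))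

lemma isUniversalDivisor_quantumRing {m : ℕ} (h : 0 < k + m) (c : ℂ) :
    IsUniversalDivisor (Algebra.ofId ℂ (QuantumRing k (k + m) c)) (quantumPolynomial h c)
      (chernPolynomialEquiv ℂ _ k (Ideal.Quotient.mkₐ ℂ _)) where
  dvd := (forall_map_quantumRelation_eq_zero_iff_dvd h).mp fun i =>
    Ideal.Quotient.eq_zero_iff_mem.mpr (Ideal.subset_span ⟨i, rfl⟩)
  exists_lift {B} _ _ ψ Q hQ := by
    obtain ⟨f, rfl⟩ := (chernPolynomialEquiv ℂ B k).surjective Q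
    obtain rfl := Subsingleton.elim (Algebra.ofId ℂ B) ψ
    have hf := (forall_map_quantumRelation_eq_zero_iff_dvd h).mpr hQ
    have hker : ∀ a ∈ Ideal.span (Set.range (quantumRelation k (k + m) c)), f a = 0 :=
      (Ideal.span_le (I := RingHom.ker f)).mpr (Set.range_subset_iff.mpr hf)
    refine ⟨Ideal.Quotient.liftₐ _ f hker, Subsingleton.elim _ _, ?_⟩
    rw [← chernPolynomialEquiv_comp, Ideal.Quotient.liftₐ_comp]
  hom_ext _ hmap := by
    rw [← chernPolynomialEquiv_comp, ← chernPolynomialEquiv_comp] at hmap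
    exact Ideal.Quotient.algHom_ext _ ((chernPolynomialEquiv ℂ _ k).injective hmap)

end QuantumRing

theorem quantum_grassmannian_ring_dimension_general
    (n k : ℕ) (hk : 1 ≤ k) (hkn : k ≤ n) (c : ℂ) :
    FiniteDimensional ℂ (QuantumRing k n c) ∧
      Module.finrank ℂ (QuantumRing k n c) = Nat.choose n k := by
  obtain ⟨m, rfl⟩ := Nat.exists_eq_add_of_le hkn
  simpa only [Module.finrank_self, mul_one] using
    (isUniversalDivisor_quantumRing (Nat.add_pos_left hk m) c).finite_and_finrank_eq

/-- For `1 ≤ k ≤ n` and `c ≠ 0`, the quantum cohomology ring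
`ℂ[X₁,…,X_k]/(Y_{n-k+1}, …, Y_{n-1}, Yₙ + c)` of the Grassmannian `G(k,n)` has dimension
`binomial(n,k)` as a `ℂ`-vector space. -/
theorem quantum_grassmannian_ring_dimension
    (n k : ℕ) (hk : 1 ≤ k) (hkn : k ≤ n) (c : ℂ) (hc : c ≠ 0) :
    FiniteDimensional ℂ
      (MvPolynomial (Fin k) ℂ ⧸ Ideal.span (Set.range (quantumRelation k n c))) ∧
    Module.finrank ℂ
        (MvPolynomial (Fin k) ℂ ⧸ Ideal.span (Set.range (quantumRelation k n c))) =
      Nat.choose n k :=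
  quantum_grassmannian_ring_dimension_general n k hk hkn c
end

section
/- For every integer k ≥ 1, the coefficient of the monomial λ₁^{k−1} λ₂^{k−1} ⋯ λ_k^{k−1} in the squared Vandermonde polynomial ∏_{1 ≤ i < j ≤ k} (λᵢ − λⱼ)² ∈ ℂ[λ₁,…,λ_k] equals (−1)^{k(k−1)/2} · k!. -/
/-!
By the Vandermonde determinant formula, `∏_{i < j} (λᵢ - λⱼ)²` is the square of
`∑ σ, sign σ • ∏ i, λᵢ ^ σ(i)`. Expanding the square, a pair `(σ, τ)` contributes to the
monomial `∏ i, λᵢ ^ (k - 1)` exactly when `σ(i) + τ(i) = k - 1` for all `i`, that is, when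
`τ = rev ∘ σ` with `rev` the order reversal of `Fin k`. Each of the `k!` permutations `σ` then
contributes `sign σ * sign (rev ∘ σ) = sign rev = (-1) ^ (k (k - 1) / 2)`, since every pair
`i < j` is an inversion of `rev`.
-/

section OrderReversal

open Equiv.Perm

variable {k : ℕ}

theorem val_add_val_eq_sub_one_iff {i j : Fin k} : (i : ℕ) + j = k - 1 ↔ j = i.rev := by
  rw [Fin.ext_iff, Fin.val_rev]
  omega

variable (k) in
theorem sign_revPerm :
    sign (Fin.revPerm : Equiv.Perm (Fin k)) = (-1) ^ (k * (k - 1) / 2) := by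
  have prod_inversions (j : Fin k) :
      (∏ i ∈ Finset.Iio j, if Fin.revPerm i < Fin.revPerm j then (1 : ℤˣ) else -1) =
        (-1) ^ (j : ℕ) := by
    have not_lt {i : Fin k} (hi : i ∈ Finset.Iio j) : ¬ Fin.revPerm i < Fin.revPerm j :=
      (Fin.rev_lt_rev.mpr (Finset.mem_Iio.mp hi)).not_gt
    rw [Finset.prod_congr rfl fun i hi => if_neg (not_lt hi), Finset.prod_const, Fin.card_Iio]
  calc sign (Fin.revPerm : Equiv.Perm (Fin k))
      = ∏ j : Fin k, (-1) ^ (j : ℕ) := by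
        simp only [sign_eq_prod_prod_Iio, prod_inversions]
    _ = (-1) ^ (k * (k - 1) / 2) := by
        rw [Finset.prod_pow_eq_pow_sum, Fin.sum_univ_eq_sum_range (fun i => i),
          Finset.sum_range_id]

theorem sign_mul_sign_revPerm_mul (σ : Equiv.Perm (Fin k)) :
    sign σ * sign (Fin.revPerm * σ) = (-1) ^ (k * (k - 1) / 2) := by
  rw [Equiv.Perm.sign_mul, mul_left_comm, Int.units_mul_self, mul_one, sign_revPerm]

theorem exponents_add_eq_const_iff {σ τ : Equiv.Perm (Fin k)} :
    (Finsupp.equivFunOnFinite.symm (fun i => (σ i : ℕ)) +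
        Finsupp.equivFunOnFinite.symm (fun i => (τ i : ℕ)) =
      Finsupp.equivFunOnFinite.symm fun _ : Fin k => k - 1) ↔ τ = Fin.revPerm * σ := by
  simp only [Finsupp.ext_iff, Equiv.ext_iff, Finsupp.add_apply,
    Finsupp.equivFunOnFinite_symm_apply_apply, val_add_val_eq_sub_one_iff, mul_apply,
    Fin.revPerm_apply]

end OrderReversal

section Vandermonde

open Equiv.Perm MvPolynomial

variable {R : Type*} [CommRing R] {k : ℕ}

theorem prod_sub_sq_eq_det_vandermonde_sq (v : Fin k → R) :
    ∏ p ∈ Finset.univ.filter (fun p : Fin k × Fin k => p.1 < p.2), (v p.1 - v p.2) ^ 2 =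
      (Matrix.vandermonde v).det ^ 2 := by
  simp only [Matrix.det_vandermonde, ← Finset.prod_pow]
  rw [Finset.prod_finset_product _ Finset.univ Finset.Ioi (by simp)]
  exact Finset.prod_congr rfl fun i _ => Finset.prod_congr rfl fun j _ => sub_sq_comm _ _

theorem det_vandermonde_X_eq_sum_monomial :
    (Matrix.vandermonde (X : Fin k → MvPolynomial (Fin k) R)).det =
      ∑ σ : Equiv.Perm (Fin k),
        monomial (Finsupp.equivFunOnFinite.symm fun i => (σ i : ℕ)) ((sign σ : ℤ) : R) := by
  rw [← Matrix.det_transpose, Matrix.det_apply']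
  refine Finset.sum_congr rfl fun σ _ => ?_
  rw [monomial_eq, Finsupp.prod_fintype _ _ fun _ => pow_zero _]
  simp [Matrix.vandermonde_apply]

theorem coeff_det_vandermonde_X_sq :
    coeff (Finsupp.equivFunOnFinite.symm fun _ : Fin k => k - 1)
        ((Matrix.vandermonde (X : Fin k → MvPolynomial (Fin k) R)).det ^ 2) =
      ∑ σ : Equiv.Perm (Fin k), ((sign σ * sign (Fin.revPerm * σ) : ℤˣ) : R) := by
  simp only [det_vandermonde_X_eq_sum_monomial, sq, Finset.sum_mul_sum, monomial_mul, coeff_sum,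
    coeff_monomial, exponents_add_eq_const_iff, Finset.sum_ite_eq', Finset.mem_univ, if_true,
    Units.val_mul, Int.cast_mul]

variable (R k) in
theorem squared_vandermonde_central_coefficient_general :
    coeff (Finsupp.equivFunOnFinite.symm fun _ : Fin k => k - 1)
        (∏ p ∈ Finset.univ.filter (fun p : Fin k × Fin k => p.1 < p.2),
          (X p.1 - X p.2 : MvPolynomial (Fin k) R) ^ 2) =
      (-1 : R) ^ (k * (k - 1) / 2) * Nat.factorial k := by
  rw [prod_sub_sq_eq_det_vandermonde_sq, coeff_det_vandermonde_X_sq]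
  simp only [sign_mul_sign_revPerm_mul, Finset.sum_const, Finset.card_univ, Fintype.card_perm,
    Fintype.card_fin, nsmul_eq_mul]
  push_cast
  exact mul_comm _ _

end Vandermonde

/-- For every `k ≥ 1`, the coefficient of the monomial
`λ₁^{k-1} λ₂^{k-1} ⋯ λ_k^{k-1}` in the squared Vandermonde polynomial
`∏_{i < j} (λᵢ - λⱼ)²` equals `(-1)^{k(k-1)/2} · k!`. -/
theorem squared_vandermonde_central_coefficient (k : ℕ) (hk : 1 ≤ k) :
    MvPolynomial.coeff (Finsupp.equivFunOnFinite.symm fun _ : Fin k => k - 1)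
        (∏ p ∈ Finset.univ.filter (fun p : Fin k × Fin k => p.1 < p.2),
          (MvPolynomial.X p.1 - MvPolynomial.X p.2 : MvPolynomial (Fin k) ℂ) ^ 2) =
      (-1 : ℂ) ^ (k * (k - 1) / 2) * Nat.factorial k :=
  squared_vandermonde_central_coefficient_general ℂ k
end
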